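/- arXiv:2512.17813 — 2 statements merged into one kernel-verified Lean document; each statement's English description precedes it below -/
import Mathlib

section
/- Let Ω ⊆ ℝⁿ be a C¹ domain, f : ℝ → ℝ continuous, and a : [0,∞) → [0,∞) continuous with t ↦ t·a(t) bounded on (0,∞) and locally Lipschitz on [0,∞). Let u ∈ C²(Ω) ∩ C¹(cl Ω) be a weak solution of Δ_a u + f(u) = 0 in Ω and suppose f(u) ≤ 0 in Ω, with no further assumptions on u. Then there exists C > 0 such that for every R > 1, ∫_{Ω ∩ {ρ ≤ R}} a(|∇u|)|∇u|² dx ≤ C·( |Ω ∩ B_{2R}| + R·H^{n−1}(∂⋆Ω ∩ B_{2R}) ), where H^{n−1} is the (n−1)-dimensional Hausdorff measure. -/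
open MeasureTheory Set Metric Filter
open scoped RealInnerProductSpace Topology ENNReal

noncomputable section

variable {n : ℕ}

/-- The quasilinear operator matrix `A(p)` applied to a vector `v`:
`A(p)v = a(|p|) v + (a'(|p|)/|p|) ⟨p,v⟩ p` (with the second term vanishing at `p = 0`). -/
def Aop (a : ℝ → ℝ) (p v : EuclideanSpace ℝ (Fin n)) : EuclideanSpace ℝ (Fin n) :=
  a ‖p‖ • v + ((deriv a ‖p‖ / ‖p‖) * ⟪p, v⟫) • p

/-- `λ₁(t) = a(t) + t·a'(t) = (t a(t))'`. -/
def lam1 (a : ℝ → ℝ) (t : ℝ) : ℝ := a t + t * deriv a t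

/-- `λ₂(t) = a(t)`. -/
def lam2 (a : ℝ → ℝ) (t : ℝ) : ℝ := a t

/-- `λmax(t) = max{λ₁(t), λ₂(t)}`. -/
def lamMax (a : ℝ → ℝ) (t : ℝ) : ℝ := max (lam1 a t) (lam2 a t)

/-- A Lipschitz test function with compact support contained in `Ω`. -/
def IsTestOn (Ω : Set (EuclideanSpace ℝ (Fin n))) (φ : EuclideanSpace ℝ (Fin n) → ℝ) : Prop :=
  (∃ K, LipschitzWith K φ) ∧ HasCompactSupport φ ∧ tsupport φ ⊆ Ω

/-- `u` is a weak solution of `div(a(|∇u|)∇u) + f(u) = 0` in `Ω`. -/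
def IsWeakSolution (a f : ℝ → ℝ) (Ω : Set (EuclideanSpace ℝ (Fin n)))
    (u : EuclideanSpace ℝ (Fin n) → ℝ) : Prop :=
  ∀ φ : EuclideanSpace ℝ (Fin n) → ℝ, IsTestOn Ω φ →
    ∫ x in Ω, a ‖gradient u x‖ * ⟪gradient u x, gradient φ x⟫
      = ∫ x in Ω, f (u x) * φ x

/-- The stability inequality for a solution `u`. -/
def IsStable (a f : ℝ → ℝ) (Ω : Set (EuclideanSpace ℝ (Fin n)))
    (u : EuclideanSpace ℝ (Fin n) → ℝ) : Prop :=
  ∀ φ : EuclideanSpace ℝ (Fin n) → ℝ, IsTestOn Ω φ →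
    ∫ x in Ω, deriv f (u x) * φ x ^ 2
      ≤ ∫ x in Ω, ⟪Aop a (gradient u x) (gradient φ x), gradient φ x⟫

/-- `u` has moderate energy growth in `Ω₀`. -/
def ModerateEnergyGrowth (a : ℝ → ℝ) (u : EuclideanSpace ℝ (Fin n) → ℝ)
    (Ω₀ : Set (EuclideanSpace ℝ (Fin n))) : Prop :=
  ∃ φ : ℕ → EuclideanSpace ℝ (Fin n) → ℝ,
    (∀ j, ∃ K, LipschitzWith K (φ j)) ∧
    (∀ j, HasCompactSupport (φ j)) ∧
    (∀ j x, 0 ≤ φ j x) ∧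
    (∀ K : Set (EuclideanSpace ℝ (Fin n)), IsCompact K → K ⊆ closure Ω₀ →
      TendstoUniformlyOn (fun j => φ j) (fun _ => (1 : ℝ)) atTop K) ∧
    Tendsto (fun j => ∫ x in Ω₀, ‖gradient u x‖ ^ 2 *
        ⟪Aop a (gradient u x) (gradient (φ j) x), gradient (φ j) x⟫)
      atTop (nhds 0)

/-- A `C^k` domain: nonempty, open, connected, with boundary locally given by a regular
`C^k` defining function. -/
def IsCkDomain (k : ℕ∞) (Ω : Set (EuclideanSpace ℝ (Fin n))) : Prop :=
  Ω.Nonempty ∧ IsOpen Ω ∧ IsConnected Ω ∧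
    ∀ p ∈ frontier Ω, ∃ V : Set (EuclideanSpace ℝ (Fin n)),
      ∃ g : EuclideanSpace ℝ (Fin n) → ℝ,
        IsOpen V ∧ p ∈ V ∧ ContDiffOn ℝ k g V ∧ (∀ x ∈ V, gradient g x ≠ 0) ∧
        Ω ∩ V = {x ∈ V | g x < 0}

/-- A `C^k` domain together with its interior unit normal field `η`. -/
def IsCkDomainWithNormal (k : ℕ∞) (Ω : Set (EuclideanSpace ℝ (Fin n)))
    (η : EuclideanSpace ℝ (Fin n) → EuclideanSpace ℝ (Fin n)) : Prop :=
  Ω.Nonempty ∧ IsOpen Ω ∧ IsConnected Ω ∧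
    ∀ p ∈ frontier Ω, ∃ V : Set (EuclideanSpace ℝ (Fin n)),
      ∃ g : EuclideanSpace ℝ (Fin n) → ℝ,
        IsOpen V ∧ p ∈ V ∧ ContDiffOn ℝ k g V ∧ (∀ x ∈ V, gradient g x ≠ 0) ∧
        Ω ∩ V = {x ∈ V | g x < 0} ∧
        η p = -(‖gradient g p‖⁻¹ • gradient g p)

/-- `a ∈ C^{1,1}_loc([0,∞))`: `C¹` on `[0,∞)` with locally Lipschitz derivative. -/
def C11Loc (a : ℝ → ℝ) : Prop :=
  ContDiffOn ℝ 1 a (Ici 0) ∧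
    ∀ t ∈ Ici (0 : ℝ), ∃ V ∈ 𝓝[Ici (0 : ℝ)] t, ∃ K, LipschitzOnWith K (deriv a) V

/-!
Since `f(u) ≤ 0`, the field `X = a(|∇u|) ∇u` has nonnegative divergence. Test this against
`ζ ψ(u)`, where `ζ` is a bump function of the ball of radius `R` and `ψ` is a bounded increasing
arctan profile at scale `R`: where `ρ ≤ R` the term `ζ ψ'(u) ⟨X, ∇u⟩` is at least half the energy
density, and `ψ(u) ⟨X, ∇ζ⟩` is bounded because `ψ ≲ R`, `|∇ζ| ≲ 1 / R` and `X` is bounded.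

The function `ζ ψ(u)` need not vanish on `∂Ω`, so it is first multiplied by a cutoff `χ = η κ`
vanishing near `∂Ω ∩ Q`, `Q` the support of `ζ`, whose flux `∫ |⟨X, ∇χ⟩|` is at most a multiple of
`H^{n-1}(∂⋆Ω ∩ Q)` up to an arbitrarily small error. The factor `η` removes the part of `∂Ω` that
`X` crosses with speed at least `δ`: this part is compact, and a product of bumps over a cover
by small balls costs `∑ rᵢ ^ (n-1)`. Elsewhere `κ` is a function of `g / ε`, with `g` a local
defining function of `Ω`: there `|⟨X, ∇g⟩| < δ` and the layer `{-ε ≤ g ≤ 0}` has measure `O(ε)`, so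
`⟨X, ∇κ⟩` contributes only `O(δ)`.
-/

open scoped NNReal
open Module (finrank)
open Function (support)

section Covering

lemma exists_radius_rpow_le_add {d : ℝ} (hd : 0 ≤ d) {D δ : ℝ≥0∞} {σ : ℝ}
    (hD : D < ENNReal.ofReal σ) (hδ : δ ≠ 0) :
    ∃ r ∈ Ioc 0 σ, D < ENNReal.ofReal r ∧ ENNReal.ofReal r ^ d ≤ D ^ d + δ := by
  have hDd : D ^ d < D ^ d + δ :=
    ENNReal.lt_add_right (ENNReal.rpow_ne_top_of_nonneg hd hD.ne_top) hδ
  have hnear : ∀ᶠ y in 𝓝[>] D, y ^ d < D ^ d + δ :=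
    nhdsWithin_le_nhds ((ENNReal.continuous_rpow_const.tendsto D).eventually_lt_const hDd)
  have := nhdsGT_neBot_of_exists_gt ⟨_, hD⟩
  obtain ⟨y, hyd, hDy, hyσ⟩ := (hnear.and (Ioo_mem_nhdsGT hD)).exists
  have hy : ENNReal.ofReal y.toReal = y := ENNReal.ofReal_toReal hyσ.ne_top
  refine ⟨y.toReal, ⟨ENNReal.toReal_pos hDy.bot_lt.ne' hyσ.ne_top, ?_⟩, ?_, ?_⟩
  · exact (ENNReal.lt_ofReal_iff_toReal_lt hyσ.ne_top).1 hyσ |>.le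
  · rwa [hy]
  · rw [hy]; exact hyd.le

variable {X : Type*} [MetricSpace X] [MeasurableSpace X] [BorelSpace X]

lemma exists_cover_tsum_ediam_rpow_lt {d : ℝ} {K : Set X} {σ δ : ℝ≥0∞} (hσ : 0 < σ) (hδ : δ ≠ 0)
    (hK : μH[d] K ≠ ∞) :
    ∃ t : ℕ → Set X, K ⊆ ⋃ i, t i ∧ (∀ i, ediam (t i) ≤ σ) ∧
      ∑' i, (⨆ _ : (t i).Nonempty, ediam (t i) ^ d) < μH[d] K + δ := by
  have hlt : ⨅ (t : ℕ → Set X) (_ : K ⊆ ⋃ i, t i) (_ : ∀ i, ediam (t i) ≤ σ),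
      ∑' i, (⨆ _ : (t i).Nonempty, ediam (t i) ^ d) < μH[d] K + δ := by
    refine lt_of_le_of_lt ?_ (ENNReal.lt_add_right hK hδ)
    rw [Measure.hausdorffMeasure_apply]
    exact le_iSup₂_of_le σ hσ le_rfl
  simpa only [iInf_lt_iff, exists_prop] using hlt

lemma exists_countable_cover_ball {d : ℝ} (hd : 0 ≤ d) {K : Set X} {σ : ℝ} (hσ : 0 < σ)
    (hK : μH[d] K ≠ ∞) :
    ∃ (J : Set ℕ) (c : J → X) (r : J → ℝ), (∀ i, r i ∈ Ioc 0 σ) ∧ K ⊆ ⋃ i, ball (c i) (r i) ∧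
      ∑' i, ENNReal.ofReal (r i) ^ d ≤ μH[d] K + ENNReal.ofReal σ := by
  have hσ2 : ENNReal.ofReal (σ / 2) ≠ 0 := by simpa using hσ
  obtain ⟨t, hKt, htσ, ht⟩ := exists_cover_tsum_ediam_rpow_lt (pos_iff_ne_zero.2 hσ2) hσ2 hK
  obtain ⟨δ, hδ, hδsum⟩ := ENNReal.exists_pos_sum_of_countable hσ2 ℕ
  have hdiam (i : ℕ) : ediam (t i) < ENNReal.ofReal σ :=
    (htσ i).trans_lt ((ENNReal.ofReal_lt_ofReal_iff hσ).2 (half_lt_self hσ))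
  choose r hr hDr hrd using fun i ↦
    exists_radius_rpow_le_add hd (hdiam i) (ENNReal.coe_ne_zero.2 (hδ i).ne')
  refine ⟨{i | (t i).Nonempty}, fun i ↦ i.2.some, fun i ↦ r i, fun i ↦ hr i, fun x hx ↦ ?_, ?_⟩
  · obtain ⟨i, hi⟩ := mem_iUnion.1 (hKt hx)
    refine mem_iUnion.2 ⟨⟨i, x, hi⟩, ?_⟩
    rw [mem_ball, dist_comm, ← edist_lt_ofReal, edist_comm]
    exact (edist_le_ediam_of_mem hi (Nonempty.some_mem _)).trans_lt (hDr i)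
  calc ∑' i : {i | (t i).Nonempty}, ENNReal.ofReal (r i) ^ d
      ≤ ∑' i : {i | (t i).Nonempty}, ((⨆ _ : (t i).Nonempty, ediam (t i) ^ d) + δ i) :=
        ENNReal.tsum_le_tsum fun i ↦ by
          rw [iSup_pos (show (t i).Nonempty from i.2)]; exact hrd i
    _ ≤ ∑' i, ((⨆ _ : (t i).Nonempty, ediam (t i) ^ d) + δ i) :=
        ENNReal.tsum_comp_le_tsum_of_injective Subtype.val_injective _
    _ = ∑' i, (⨆ _ : (t i).Nonempty, ediam (t i) ^ d) + ∑' i, (δ i : ℝ≥0∞) := ENNReal.tsum_add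
    _ ≤ μH[d] K + ENNReal.ofReal (σ / 2) + ENNReal.ofReal (σ / 2) := add_le_add ht.le hδsum.le
    _ = μH[d] K + ENNReal.ofReal σ := by
        rw [add_assoc, ← ENNReal.ofReal_add (by positivity) (by positivity), add_halves]

lemma exists_finite_cover_ball_sum_rpow_le {d : ℝ} (hd : 0 ≤ d) {K : Set X} (hK : IsCompact K)
    (hHK : μH[d] K ≠ ∞) {σ : ℝ} (hσ : 0 < σ) :
    ∃ (ι : Type) (_ : Fintype ι) (c : ι → X) (r : ι → ℝ), (∀ i, r i ∈ Ioc 0 σ) ∧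
      K ⊆ ⋃ i, ball (c i) (r i) ∧
      ∑ i, ENNReal.ofReal (r i) ^ d ≤ μH[d] K + ENNReal.ofReal σ := by
  obtain ⟨J, c, r, hr, hKJ, hsum⟩ := exists_countable_cover_ball hd hσ hHK
  obtain ⟨T, hT⟩ := hK.elim_finite_subcover _ (fun _ ↦ isOpen_ball) hKJ
  refine ⟨T, inferInstance, fun i ↦ c i, fun i ↦ r i, fun i ↦ hr i, ?_, ?_⟩
  · simpa only [iUnion_subtype] using hT
  · rw [Finset.sum_coe_sort T fun i ↦ ENNReal.ofReal (r i) ^ d]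
    exact (ENNReal.sum_le_tsum T).trans hsum

end Covering

section Slab

variable {E : Type*} [NormedAddCommGroup E] [NormedSpace ℝ E]

lemma exists_closedBall_abs_sub_le_two_mul {g : E → ℝ} {g' : E →L[ℝ] ℝ} {p e : E}
    (hg : HasStrictFDerivAt g g' p) (he : g' e = 1) :
    ∃ r > 0, ContinuousOn g (closedBall p r) ∧ ∀ x s t, x - s • e ∈ closedBall p r →
      x - t • e ∈ closedBall p r → |s - t| ≤ 2 * |g (x - s • e) - g (x - t • e)| := by
  have he0 : 0 < ‖e‖ := norm_pos_iff.2 fun h ↦ by simp [h] at he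
  obtain ⟨U, hU, happrox⟩ := hg.approximates_deriv_on_nhds (c := (2 * ‖e‖₊)⁻¹)
    (.inr (inv_pos.2 (mul_pos two_pos he0)))
  obtain ⟨r, hr, hrU⟩ := nhds_basis_closedBall.mem_iff.1 hU
  refine ⟨r, hr, (happrox.mono_set hrU).continuousOn, fun x s t hs ht ↦ ?_⟩
  have hdiff : x - s • e - (x - t • e) = (t - s) • e := by module
  have h := happrox (x - s • e) (hrU hs) (x - t • e) (hrU ht)
  rw [hdiff, map_smul, he, norm_smul, Real.norm_eq_abs, Real.norm_eq_abs, smul_eq_mul, mul_one] at h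
  have hhalf : ((2 * ‖e‖₊)⁻¹ : ℝ≥0) * (|t - s| * ‖e‖) = |t - s| / 2 := by
    push_cast; field_simp
  have htri := abs_sub_abs_le_abs_sub (t - s) (g (x - s • e) - g (x - t • e))
  rw [abs_sub_comm (t - s)] at htri
  rw [abs_sub_comm s]
  linarith

lemma volume_line_inter_slab_le {g : E → ℝ} {p e : E} {r : ℝ}
    (hline : ∀ x s t, x - s • e ∈ closedBall p r → x - t • e ∈ closedBall p r →
      |s - t| ≤ 2 * |g (x - s • e) - g (x - t • e)|) (a b : ℝ) (x : E) :
    volume {t ∈ Icc (0 : ℝ) 1 | x - t • e ∈ closedBall p r ∩ g ⁻¹' Icc a b} ≤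
      (closedBall p (r + ‖e‖)).indicator (fun _ ↦ ENNReal.ofReal (2 * (b - a))) x := by
  obtain hempty | ⟨t, ⟨ht, htp, -⟩⟩ :=
    eq_empty_or_nonempty {t ∈ Icc (0 : ℝ) 1 | x - t • e ∈ closedBall p r ∩ g ⁻¹' Icc a b}
  · rw [hempty, measure_empty]; exact zero_le
  have hx : x ∈ closedBall p (r + ‖e‖) := by
    rw [mem_closedBall_iff_norm]
    calc ‖x - p‖ = ‖(x - t • e - p) + t • e‖ := by congr 1; abel
      _ ≤ r + |t| * ‖e‖ := norm_add_le_of_le (mem_closedBall_iff_norm.1 htp) (norm_smul _ _).le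
      _ ≤ r + ‖e‖ := by
        gcongr
        exact mul_le_of_le_one_left (norm_nonneg e) (abs_le.2 ⟨by linarith [ht.1], ht.2⟩)
  rw [indicator_of_mem hx]
  refine (Real.volume_le_diam _).trans (ediam_le fun s hs t ht ↦ ?_)
  rw [edist_dist, Real.dist_eq]
  refine ENNReal.ofReal_le_ofReal ((hline x s t hs.2.1 ht.2.1).trans ?_)
  gcongr
  exact abs_sub_le_of_le_of_le hs.2.2.1 hs.2.2.2 ht.2.2.1 ht.2.2.2

variable [FiniteDimensional ℝ E] [MeasurableSpace E] [BorelSpace E]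

lemma lintegral_volume_line_inter (μ : Measure E) [μ.IsAddHaarMeasure] (e : E) {I : Set ℝ}
    (hI : MeasurableSet I) {L : Set E} (hL : MeasurableSet L) :
    ∫⁻ x, volume {t ∈ I | x - t • e ∈ L} ∂μ = volume I * μ L := by
  set S : Set (E × ℝ) := {p | p.2 ∈ I ∧ p.1 - p.2 • e ∈ L} with hS_def
  have hS : MeasurableSet S :=
    (measurable_snd hI).inter
      ((continuous_fst.sub (continuous_snd.smul continuous_const)).measurable hL)
  have hslice (t : ℝ) : μ ((fun x ↦ (x, t)) ⁻¹' S) = I.indicator (fun _ ↦ μ L) t := by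
    by_cases ht : t ∈ I
    · have : (fun x ↦ (x, t)) ⁻¹' S = (fun x ↦ x + -(t • e)) ⁻¹' L := by
        ext x; simp [hS_def, ht, sub_eq_add_neg]
      rw [this, measure_preimage_add_right, indicator_of_mem ht]
    · simp [hS_def, ht]
  calc ∫⁻ x, volume {t ∈ I | x - t • e ∈ L} ∂μ = (μ.prod volume) S := (Measure.prod_apply hS).symm
    _ = ∫⁻ t, I.indicator (fun _ ↦ μ L) t := by simp_rw [Measure.prod_apply_symm hS, hslice]
    _ = volume I * μ L := by rw [lintegral_indicator_const hI, mul_comm]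

lemma measure_inter_preimage_Icc_le {μ : Measure E} [μ.IsAddHaarMeasure] {g : E → ℝ} {p e : E}
    {r : ℝ} (hg : ContinuousOn g (closedBall p r))
    (hline : ∀ x s t, x - s • e ∈ closedBall p r → x - t • e ∈ closedBall p r →
      |s - t| ≤ 2 * |g (x - s • e) - g (x - t • e)|) (a b : ℝ) :
    μ (closedBall p r ∩ g ⁻¹' Icc a b) ≤
      ENNReal.ofReal (2 * (b - a)) * μ (closedBall p (r + ‖e‖)) := by
  have hL := hg.preimage_isClosed_of_isClosed isClosed_closedBall (isClosed_Icc (a := a) (b := b))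
  -- Fubini along the lines `t ↦ x - t • e`, on each of which the slab is short.
  calc μ (closedBall p r ∩ g ⁻¹' Icc a b)
      = ∫⁻ x, volume {t ∈ Icc (0 : ℝ) 1 | x - t • e ∈ closedBall p r ∩ g ⁻¹' Icc a b} ∂μ := by
        rw [lintegral_volume_line_inter μ e measurableSet_Icc hL.measurableSet]; simp
    _ ≤ ∫⁻ x, (closedBall p (r + ‖e‖)).indicator (fun _ ↦ ENNReal.ofReal (2 * (b - a))) x ∂μ :=
        lintegral_mono (volume_line_inter_slab_le hline a b)
    _ = ENNReal.ofReal (2 * (b - a)) * μ (closedBall p (r + ‖e‖)) :=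
        lintegral_indicator_const isClosed_closedBall.measurableSet _

lemma exists_measure_closedBall_inter_preimage_Icc_le (μ : Measure E) [μ.IsAddHaarMeasure]
    {g : E → ℝ} {g' : E →L[ℝ] ℝ} {p : E} (hg : HasStrictFDerivAt g g' p) (hg' : g' ≠ 0) :
    ∃ r > 0, ∃ A : ℝ≥0, ∀ a b,
      μ (closedBall p r ∩ g ⁻¹' Icc a b) ≤ A * ENNReal.ofReal (b - a) := by
  obtain ⟨v, hv⟩ := DFunLike.ne_iff.1 hg'
  have he : g' ((g' v)⁻¹ • v) = 1 := by simp [inv_mul_cancel₀ hv]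
  obtain ⟨r, hr, hcont, hline⟩ := exists_closedBall_abs_sub_le_two_mul hg he
  have hfin : μ (closedBall p (r + ‖(g' v)⁻¹ • v‖)) ≠ ∞ := measure_closedBall_lt_top.ne
  refine ⟨r, hr, 2 * (μ (closedBall p (r + ‖(g' v)⁻¹ • v‖))).toNNReal, fun a b ↦ ?_⟩
  refine (measure_inter_preimage_Icc_le hcont hline a b).trans_eq ?_
  rw [ENNReal.ofReal_mul zero_le_two, ENNReal.coe_mul, ENNReal.coe_toNNReal hfin]
  simp [mul_right_comm]

end Slab

section Boundary

variable {E : Type*} [NormedAddCommGroup E] [NormedSpace ℝ E]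

/-- `g` is a regular `C¹` defining function of `Ω` on the open set `V`: there `Ω` is the sublevel
set `{g < 0}` and the differential of `g` does not vanish. -/
structure IsLocalDefiningFunction (Ω V : Set E) (g : E → ℝ) : Prop where
  isOpen : IsOpen V
  contDiffOn : ContDiffOn ℝ 1 g V
  fderiv_ne_zero : ∀ x ∈ V, fderiv ℝ g x ≠ 0
  inter_eq : Ω ∩ V = {x ∈ V | g x < 0}

/-- `Ω` has `C¹` boundary: near each boundary point it admits a local defining function. -/
def HasC1Boundary (Ω : Set E) : Prop :=
  ∀ p ∈ frontier Ω, ∃ V g, p ∈ V ∧ IsLocalDefiningFunction Ω V g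

/-- The vector `v` is tangent to `∂Ω` at `q`, i.e. annihilated by the differential at `q` of every
local defining function. -/
def IsTangentAt (Ω : Set E) (q v : E) : Prop :=
  ∀ V g, q ∈ V → IsLocalDefiningFunction Ω V g → fderiv ℝ g q v = 0

/-- The part of `∂Ω` where the vector field `X` is not tangent. For `X = ∇u` this is the set `∂⋆Ω`
of the paper. -/
def nontangentialBoundary (Ω : Set E) (X : E → E) : Set E :=
  {q ∈ frontier Ω | ¬ IsTangentAt Ω q (X q)}

lemma IsTangentAt.smul {Ω : Set E} {q v : E} (h : IsTangentAt Ω q v) (α : ℝ) :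
    IsTangentAt Ω q (α • v) :=
  fun V g hqV hg ↦ by rw [map_smul, h V g hqV hg, smul_zero]

lemma nontangentialBoundary_smul_subset (Ω : Set E) (α : E → ℝ) (X : E → E) :
    nontangentialBoundary Ω (fun x ↦ α x • X x) ⊆ nontangentialBoundary Ω X :=
  fun _ hq ↦ ⟨hq.1, fun h ↦ hq.2 (h.smul _)⟩

namespace IsLocalDefiningFunction

variable {Ω V V' : Set E} {g g' : E → ℝ} {q v : E}

lemma mem_iff (h : IsLocalDefiningFunction Ω V g) (hq : q ∈ V) : q ∈ Ω ↔ g q < 0 := by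
  simpa [hq] using Set.ext_iff.1 h.inter_eq q

lemma contDiffAt (h : IsLocalDefiningFunction Ω V g) (hq : q ∈ V) : ContDiffAt ℝ 1 g q :=
  h.contDiffOn.contDiffAt (h.isOpen.mem_nhds hq)

lemma differentiableAt (h : IsLocalDefiningFunction Ω V g) (hq : q ∈ V) :
    DifferentiableAt ℝ g q :=
  (h.contDiffAt hq).differentiableAt one_ne_zero

lemma eq_zero_of_mem_frontier (h : IsLocalDefiningFunction Ω V g) (hΩ : IsOpen Ω)
    (hq : q ∈ V) (hqf : q ∈ frontier Ω) : g q = 0 := by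
  rw [hΩ.frontier_eq] at hqf
  refine le_antisymm (not_lt.1 fun hpos ↦ ?_) (not_lt.1 fun hneg ↦ hqf.2 ((h.mem_iff hq).2 hneg))
  have hnear := ((h.differentiableAt hq).continuousAt.eventually_const_lt hpos).and
    (h.isOpen.mem_nhds hq)
  obtain ⟨x, ⟨hgx, hxV⟩, hxΩ⟩ := mem_closure_iff_nhds.1 hqf.1 _ hnear
  exact hgx.not_gt ((h.mem_iff hxV).1 hxΩ)

end IsLocalDefiningFunction

lemma eventually_add_smul_neg {g : E → ℝ} {q w : E} (hg : DifferentiableAt ℝ g q) (hq : g q = 0)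
    (hw : fderiv ℝ g q w < 0) : ∀ᶠ t : ℝ in 𝓝[>] 0, g (q + t • w) < 0 := by
  have hline : HasDerivAt (fun t : ℝ ↦ g (q + t • w)) (fderiv ℝ g q w) 0 :=
    hg.hasFDerivAt.hasLineDerivAt w
  filter_upwards [nhdsWithin_le_nhds (eventually_nhdsWithin_sign_eq_of_deriv_neg
    (hline.deriv.trans_lt hw) (by simpa using hq)), self_mem_nhdsWithin] with t hsign ht
  rwa [zero_sub, sign_neg (neg_lt_zero.2 ht), sign_eq_neg_one_iff] at hsign

lemma apply_eq_zero_of_forall_neg_imp_nonpos {L L' : E →L[ℝ] ℝ} (hL : L ≠ 0)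
    (hLL' : ∀ w, L w < 0 → L' w ≤ 0) {v : E} (hv : L v = 0) : L' v = 0 := by
  obtain ⟨w, hw⟩ : ∃ w, L w < 0 := by
    obtain ⟨w, hw⟩ := DFunLike.ne_iff.1 hL
    rcases lt_or_gt_of_ne hw with hw | hw
    exacts [⟨w, hw⟩, ⟨-w, by simpa using hw⟩]
  by_contra hv'
  have h := hLL' (w + ((1 - L' w) / L' v) • v) (by simpa [hv] using hw)
  rw [map_add, map_smul, smul_eq_mul, div_mul_cancel₀ _ hv'] at h
  linarith

lemma IsLocalDefiningFunction.isTangentAt {Ω V : Set E} {g : E → ℝ} {q v : E}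
    (h : IsLocalDefiningFunction Ω V g) (hΩ : IsOpen Ω) (hqV : q ∈ V) (hq : q ∈ frontier Ω)
    (hv : fderiv ℝ g q v = 0) : IsTangentAt Ω q v := by
  intro V' g' hqV' h'
  refine apply_eq_zero_of_forall_neg_imp_nonpos (h.fderiv_ne_zero q hqV) (fun w hw ↦ ?_) hv
  by_contra! hw'
  have hin := eventually_add_smul_neg (h.differentiableAt hqV)
    (h.eq_zero_of_mem_frontier hΩ hqV hq) hw
  have hout := eventually_add_smul_neg (g := -g') (w := w) (h'.differentiableAt hqV').neg
    (by simpa using h'.eq_zero_of_mem_frontier hΩ hqV' hq) (by simpa [fderiv_neg] using hw')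
  have hray : Tendsto (fun t : ℝ ↦ q + t • w) (𝓝[>] 0) (𝓝 q) := by
    have : Continuous fun t : ℝ ↦ q + t • w := by fun_prop
    simpa using (this.tendsto 0).mono_left nhdsWithin_le_nhds
  obtain ⟨t, ⟨⟨hgt, hg't⟩, htV⟩, htV'⟩ := (((hin.and hout).and (hray.eventually
    (h.isOpen.mem_nhds hqV))).and (hray.eventually (h'.isOpen.mem_nhds hqV'))).exists
  have hg' := (h'.mem_iff htV').1 ((h.mem_iff htV).2 hgt)
  simp only [Pi.neg_apply] at hg't
  linarith

end Boundary

section Cutoff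

/-- The product `∏ i, (1 - h i)`, which vanishes wherever one of the `h i` equals `1`. -/
def complProd {ι α : Type*} [Fintype ι] (h : ι → α → ℝ) (x : α) : ℝ := ∏ i, (1 - h i x)

lemma complProd_eq_zero {ι α : Type*} [Fintype ι] {h : ι → α → ℝ} {i : ι} {x : α}
    (hi : h i x = 1) : complProd h x = 0 :=
  Finset.prod_eq_zero (Finset.mem_univ i) (by simp [hi])

lemma setOf_complProd_ne_one_subset {ι α : Type*} [Fintype ι] [TopologicalSpace α]
    {h : ι → α → ℝ} : {x | complProd h x ≠ 1} ⊆ ⋃ i, tsupport (h i) := by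
  intro x hx
  contrapose! hx
  simp only [mem_iUnion, not_exists] at hx
  simp [complProd, image_eq_zero_of_notMem_tsupport (hx _)]

lemma measure_setOf_complProd_ne_one_le {ι α : Type*} [Fintype ι] [TopologicalSpace α]
    [MeasurableSpace α] (μ : Measure α) (h : ι → α → ℝ) :
    μ {x | complProd h x ≠ 1} ≤ ∑ i, μ (tsupport (h i)) :=
  (measure_mono setOf_complProd_ne_one_subset).trans (measure_iUnion_fintype_le _ _)

variable {E : Type*} [NormedAddCommGroup E] [NormedSpace ℝ E]

/-- A `C¹` function with values in `[0, 1]`. -/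
structure IsCutoff (χ : E → ℝ) : Prop where
  contDiff : ContDiff ℝ 1 χ
  mem_Icc : ∀ x, χ x ∈ Icc (0 : ℝ) 1

namespace IsCutoff

variable {χ η : E → ℝ}

lemma continuous (hχ : IsCutoff χ) : Continuous χ := hχ.contDiff.continuous

lemma differentiable (hχ : IsCutoff χ) : Differentiable ℝ χ :=
  hχ.contDiff.differentiable one_ne_zero

lemma mul (hχ : IsCutoff χ) (hη : IsCutoff η) : IsCutoff (χ * η) :=
  ⟨hχ.contDiff.mul hη.contDiff, fun x ↦ unitInterval.mul_mem (hχ.mem_Icc x) (hη.mem_Icc x)⟩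

end IsCutoff

variable {ι : Type*} [Fintype ι] {h : ι → E → ℝ}

lemma IsCutoff.complProd (hh : ∀ i, IsCutoff (h i)) : IsCutoff (complProd h) where
  contDiff := contDiff_prod fun i _ ↦ contDiff_const.sub (hh i).contDiff
  mem_Icc x := unitInterval.prod_mem fun i _ ↦ Icc.mem_iff_one_sub_mem.1 ((hh i).mem_Icc x)

lemma exists_fderiv_complProd_eq_sum (hh : ∀ i, IsCutoff (h i)) (x : E) :
    ∃ a : ι → ℝ, (∀ i, ‖a i‖ₑ ≤ 1) ∧ fderiv ℝ (complProd h) x = ∑ i, a i • fderiv ℝ (h i) x := by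
  classical
  have hD : HasFDerivAt (complProd h)
      (∑ i, (∏ j ∈ Finset.univ.erase i, (1 - h j x)) • -fderiv ℝ (h i) x) x :=
    HasFDerivAt.finsetProd fun i _ ↦ ((hh i).differentiable x).hasFDerivAt.const_sub 1
  refine ⟨fun i ↦ -∏ j ∈ Finset.univ.erase i, (1 - h j x), fun i ↦ ?_, by simp [hD.fderiv]⟩
  have hmem : ∏ j ∈ Finset.univ.erase i, (1 - h j x) ∈ unitInterval :=
    unitInterval.prod_mem fun j _ ↦ Icc.mem_iff_one_sub_mem.1 ((hh j).mem_Icc x)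
  rw [enorm_neg, Real.enorm_of_nonneg hmem.1]
  exact ENNReal.ofReal_le_one.2 hmem.2

lemma enorm_fderiv_complProd_apply_le (hh : ∀ i, IsCutoff (h i)) (x v : E) :
    ‖fderiv ℝ (complProd h) x v‖ₑ ≤ ∑ i, ‖fderiv ℝ (h i) x v‖ₑ := by
  obtain ⟨a, ha, hfderiv⟩ := exists_fderiv_complProd_eq_sum hh x
  rw [hfderiv, sum_apply]
  refine (enorm_sum_le _ _).trans (Finset.sum_le_sum fun i _ ↦ ?_)
  rw [smul_apply, enorm_smul]
  exact mul_le_of_le_one_left zero_le (ha i)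

lemma enorm_fderiv_complProd_le (hh : ∀ i, IsCutoff (h i)) (x : E) :
    ‖fderiv ℝ (complProd h) x‖ₑ ≤ ∑ i, ‖fderiv ℝ (h i) x‖ₑ := by
  obtain ⟨a, ha, hfderiv⟩ := exists_fderiv_complProd_eq_sum hh x
  rw [hfderiv]
  refine (enorm_sum_le Finset.univ fun i ↦ a i • fderiv ℝ (h i) x).trans
    (Finset.sum_le_sum fun i _ ↦ ?_)
  rw [enorm_smul]
  exact mul_le_of_le_one_left zero_le (ha i)

lemma lintegral_enorm_fderiv_complProd_le [MeasurableSpace E] [BorelSpace E] (μ : Measure E)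
    (hh : ∀ i, IsCutoff (h i)) :
    ∫⁻ x, ‖fderiv ℝ (complProd h) x‖ₑ ∂μ ≤ ∑ i, ∫⁻ x, ‖fderiv ℝ (h i) x‖ₑ ∂μ :=
  (lintegral_mono (enorm_fderiv_complProd_le hh)).trans_eq
    (lintegral_finsetSum _ fun i _ ↦ (measurable_fderiv ℝ (h i)).enorm)

end Cutoff

section BallBump

variable {E : Type*} [NormedAddCommGroup E] [NormedSpace ℝ E] [FiniteDimensional ℝ E]

/-- A bump function equal to `1` on `closedBall c r` and supported in `closedBall c (3 / 2 * r)`;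
all of them are rescaled translates of each other. -/
def ballBump (c : E) {r : ℝ} (hr : 0 < r) : ContDiffBump c :=
  ⟨r, 3 / 2 * r, hr, by linarith⟩

lemma IsCutoff.ballBump (c : E) {r : ℝ} (hr : 0 < r) : IsCutoff (ballBump c hr) :=
  ⟨(_root_.ballBump c hr).contDiff, fun _ ↦
    ⟨(_root_.ballBump c hr).nonneg, (_root_.ballBump c hr).le_one⟩⟩

lemma ballBump_apply (c : E) {r : ℝ} (hr : 0 < r) (x : E) :
    ballBump c hr x = ballBump (0 : E) one_pos (r⁻¹ • (x - c)) := by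
  simp [ContDiffBump.apply, ballBump, hr.ne']

variable (E) in
lemma exists_enorm_fderiv_ballBump_le : ∃ C : ℝ≥0, ∀ (c : E) (r : ℝ) (hr : 0 < r) (x : E),
    ‖fderiv ℝ (ballBump c hr) x‖ₑ ≤ C * (ENNReal.ofReal r)⁻¹ := by
  set b := ballBump (0 : E) one_pos
  obtain ⟨C, hC⟩ := (b.contDiff.continuous_fderiv one_ne_zero).bounded_above_of_compact_support
    (b.hasCompactSupport.fderiv ℝ)
  refine ⟨C.toNNReal, fun c r hr x ↦ ?_⟩
  have hfderiv : fderiv ℝ (ballBump c hr) x = r⁻¹ • fderiv ℝ b (r⁻¹ • (x - c)) := by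
    rw [show (ballBump c hr : E → ℝ) = fun y ↦ b (r⁻¹ • (y - c)) from funext (ballBump_apply c hr),
      fderiv_comp_sub (f := fun y ↦ b (r⁻¹ • y)), fderiv_comp_smul]
  rw [hfderiv, enorm_smul, mul_comm, Real.enorm_of_nonneg (by positivity),
    ENNReal.ofReal_inv_of_pos hr]
  gcongr
  rw [← ofReal_norm]
  exact ENNReal.ofReal_le_ofReal (hC _)

variable [MeasurableSpace E] [BorelSpace E]

lemma measure_tsupport_ballBump (μ : Measure E) [μ.IsAddHaarMeasure] (c : E) {r : ℝ} (hr : 0 < r) :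
    μ (tsupport (ballBump c hr)) =
      μ (closedBall 0 (3 / 2)) * ENNReal.ofReal r ^ finrank ℝ E := by
  rw [ContDiffBump.tsupport_eq, show (ballBump c hr).rOut = r * (3 / 2) from mul_comm _ _,
    Measure.addHaar_closedBall_mul μ c hr.le (by norm_num), mul_comm, ENNReal.ofReal_pow hr.le]

lemma exists_measure_lintegral_fderiv_ballBump_le (μ : Measure E)
    [μ.IsAddHaarMeasure] : ∃ C : ℝ≥0, ∀ (c : E) (r : ℝ) (hr : 0 < r),
      μ (tsupport (ballBump c hr)) ≤
        C * (ENNReal.ofReal r * ENNReal.ofReal r ^ ((finrank ℝ E : ℝ) - 1)) ∧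
      ∫⁻ x, ‖fderiv ℝ (ballBump c hr) x‖ₑ ∂μ ≤
        C * ENNReal.ofReal r ^ ((finrank ℝ E : ℝ) - 1) := by
  obtain ⟨C, hC⟩ := exists_enorm_fderiv_ballBump_le E
  set m := (μ (closedBall (0 : E) (3 / 2))).toNNReal
  have hm : (m : ℝ≥0∞) = μ (closedBall 0 (3 / 2)) :=
    ENNReal.coe_toNNReal measure_closedBall_lt_top.ne
  have hvol (c : E) (r : ℝ) (hr : 0 < r) : μ (tsupport (ballBump c hr)) =
      m * (ENNReal.ofReal r * ENNReal.ofReal r ^ ((finrank ℝ E : ℝ) - 1)) := by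
    rw [measure_tsupport_ballBump, hm, ← ENNReal.rpow_natCast]
    nth_rw 2 [← ENNReal.rpow_one (ENNReal.ofReal r)]
    rw [← ENNReal.rpow_add _ _ (ENNReal.ofReal_pos.2 hr).ne' ENNReal.ofReal_ne_top,
      add_sub_cancel]
  refine ⟨max m (C * m), fun c r hr ↦ ⟨?_, ?_⟩⟩
  · rw [hvol]; gcongr; exact le_max_left _ _
  have hpt (x : E) : ‖fderiv ℝ (ballBump c hr) x‖ₑ ≤
      (tsupport (ballBump c hr)).indicator (fun _ ↦ C * (ENNReal.ofReal r)⁻¹) x := by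
    by_cases hx : x ∈ tsupport (ballBump c hr)
    · simpa [hx] using hC c r hr x
    · simp [fderiv_of_notMem_tsupport ℝ hx, ← ofReal_norm]
  calc ∫⁻ x, ‖fderiv ℝ (ballBump c hr) x‖ₑ ∂μ
      ≤ C * (ENNReal.ofReal r)⁻¹ * μ (tsupport (ballBump c hr)) :=
        (lintegral_mono hpt).trans (lintegral_indicator_const_le _ _)
    _ = (C * m : ℝ≥0) * ENNReal.ofReal r ^ ((finrank ℝ E : ℝ) - 1) := by
        rw [hvol, mul_mul_mul_comm, ← mul_assoc (ENNReal.ofReal r)⁻¹,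
          ENNReal.inv_mul_cancel (ENNReal.ofReal_pos.2 hr).ne' ENNReal.ofReal_ne_top, one_mul,
          ENNReal.coe_mul]
    _ ≤ _ := by gcongr; exact le_max_right _ _

end BallBump

section SmallSet

lemma eventually_mul_ofReal_le {A τ : ℝ≥0∞} (hA : A ≠ ∞) (hτ : τ ≠ 0) :
    ∀ᶠ s in 𝓝[>] (0 : ℝ), A * ENNReal.ofReal s ≤ τ := by
  have h := ENNReal.Tendsto.const_mul (ENNReal.continuous_ofReal.tendsto 0) (.inr hA)
  rw [ENNReal.ofReal_zero, mul_zero] at h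
  exact nhdsWithin_le_nhds (h.eventually_le_const hτ.bot_lt)

variable {E : Type*} [NormedAddCommGroup E] [NormedSpace ℝ E] [FiniteDimensional ℝ E]
  [Nontrivial E] [MeasurableSpace E] [BorelSpace E]

lemma exists_cutoff_eq_zero_near_isCompact (μ : Measure E) [μ.IsAddHaarMeasure] :
    ∃ C : ℝ≥0, ∀ K : Set E, IsCompact K → μH[(finrank ℝ E : ℝ) - 1] K ≠ ∞ → ∀ τ : ℝ≥0∞, τ ≠ 0 →
      ∃ (η : E → ℝ) (U : Set E), IsCutoff η ∧ IsOpen U ∧ K ⊆ U ∧ (∀ x ∈ U, η x = 0) ∧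
        μ {x | η x ≠ 1} ≤ τ ∧
        ∫⁻ x, ‖fderiv ℝ η x‖ₑ ∂μ ≤ C * μH[(finrank ℝ E : ℝ) - 1] K + τ := by
  obtain ⟨C, hC⟩ := exists_measure_lintegral_fderiv_ballBump_le μ
  refine ⟨C, fun K hK hHK τ hτ ↦ ?_⟩
  have hd : 0 ≤ (finrank ℝ E : ℝ) - 1 := by
    simpa using Nat.succ_le_of_lt (Module.finrank_pos (R := ℝ) (M := E))
  set d := (finrank ℝ E : ℝ) - 1
  have hA : C * (μH[d] K + 1) ≠ ∞ := by finiteness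
  obtain ⟨σ, hστ, hσ, hσ1⟩ :=
    ((eventually_mul_ofReal_le hA hτ).and (Ioc_mem_nhdsGT one_pos)).exists
  obtain ⟨ι, _, c, r, hr, hKU, hsum⟩ := exists_finite_cover_ball_sum_rpow_le hd hK hHK hσ
  have hsum1 : ∑ i, ENNReal.ofReal (r i) ^ d ≤ μH[d] K + 1 :=
    hsum.trans (by gcongr; exact ENNReal.ofReal_le_one.2 hσ1)
  let h (i : ι) : E → ℝ := ballBump (c i) (hr i).1
  have hh (i : ι) : IsCutoff (h i) := .ballBump _ _
  refine ⟨complProd h, ⋃ i, ball (c i) (r i), .complProd hh, isOpen_iUnion fun _ ↦ isOpen_ball, hKU,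
    fun x hx ↦ ?_, ?_, ?_⟩
  · obtain ⟨i, hi⟩ := mem_iUnion.1 hx
    exact complProd_eq_zero
      ((ballBump (c i) (hr i).1).one_of_mem_closedBall (ball_subset_closedBall hi))
  · calc μ {x | complProd h x ≠ 1} ≤ ∑ i, μ (tsupport (h i)) :=
          measure_setOf_complProd_ne_one_le μ h
      _ ≤ ∑ i, C * (ENNReal.ofReal σ * ENNReal.ofReal (r i) ^ d) := by
          gcongr with i
          refine (hC (c i) (r i) (hr i).1).1.trans ?_
          gcongr
          exact (hr i).2
      _ = C * (∑ i, ENNReal.ofReal (r i) ^ d) * ENNReal.ofReal σ := by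
          rw [← Finset.mul_sum, ← Finset.mul_sum]; ring
      _ ≤ τ := le_trans (by gcongr) hστ
  · calc ∫⁻ x, ‖fderiv ℝ (complProd h) x‖ₑ ∂μ ≤ ∑ i, ∫⁻ x, ‖fderiv ℝ (h i) x‖ₑ ∂μ :=
          lintegral_enorm_fderiv_complProd_le μ hh
      _ ≤ ∑ i, C * ENNReal.ofReal (r i) ^ d := Finset.sum_le_sum fun i _ ↦ (hC _ _ (hr i).1).2
      _ ≤ C * (μH[d] K + ENNReal.ofReal σ) := by rw [← Finset.mul_sum]; gcongr
      _ ≤ C * μH[d] K + τ := by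
          rw [mul_add]
          gcongr
          refine le_trans ?_ hστ
          gcongr
          exact le_mul_of_one_le_right' le_add_self

end SmallSet

section Layer

lemma exists_enorm_deriv_smoothTransition_le :
    ∃ C : ℝ≥0, ∀ t, ‖deriv Real.smoothTransition t‖ₑ ≤ C := by
  have hsupp : HasCompactSupport (deriv Real.smoothTransition) := by
    refine .intro (isCompact_Icc (a := 0) (b := 1)) fun t ht ↦ ?_
    rw [mem_Icc, not_and_or, not_le, not_le] at ht
    rcases ht with ht | ht
    · have : Real.smoothTransition =ᶠ[𝓝 t] fun _ ↦ 0 := by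
        filter_upwards [gt_mem_nhds ht] with s hs
        exact Real.smoothTransition.zero_of_nonpos hs.le
      rw [this.deriv_eq, deriv_const]
    · have : Real.smoothTransition =ᶠ[𝓝 t] fun _ ↦ 1 := by
        filter_upwards [lt_mem_nhds ht] with s hs
        exact Real.smoothTransition.one_of_one_le hs.le
      rw [this.deriv_eq, deriv_const]
  obtain ⟨C, hC⟩ := (Real.smoothTransition.contDiff.continuous_deriv
    le_rfl).bounded_above_of_compact_support hsupp
  refine ⟨C.toNNReal, fun t ↦ ?_⟩
  rw [← ofReal_norm]
  exact ENNReal.ofReal_le_ofReal (hC t)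

lemma eventually_forall_lt_of_isCompact {α : Type*} [TopologicalSpace α] [T2Space α] {Z : Set α}
    (hZ : IsCompact Z) {F g : α → ℝ} (hF : ContinuousOn F Z) (hg : ContinuousOn g Z) {δ : ℝ}
    (h : ∀ x ∈ Z, 0 ≤ g x → F x < δ) :
    ∀ᶠ ε in 𝓝[>] (0 : ℝ), ∀ x ∈ Z, -ε ≤ g x → F x < δ := by
  have hbad : IsCompact (Z ∩ F ⁻¹' Ici δ) :=
    hZ.of_isClosed_subset (hF.preimage_isClosed_of_isClosed hZ.isClosed isClosed_Ici)
      inter_subset_left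
  obtain ⟨a, ha, hag⟩ := hbad.exists_forall_le' (hg.neg.mono inter_subset_left) (a := 0)
    fun x hx ↦ by simpa using mt (h x hx.1) hx.2.not_gt
  filter_upwards [Ioo_mem_nhdsGT ha] with ε hε x hx hgx
  by_contra! hFx
  exact (hag x ⟨hx, hFx⟩).not_gt ((neg_le.1 hgx).trans_lt hε.2)

variable {E : Type*} [NormedAddCommGroup E] [NormedSpace ℝ E]

lemma contDiff_of_forall_mem_tsupport {f : E → ℝ} {m : WithTop ℕ∞}
    (hf : ∀ x ∈ tsupport f, ContDiffAt ℝ m f x) : ContDiff ℝ m f := by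
  refine contDiff_iff_contDiffAt.2 fun x ↦ ?_
  by_cases hx : x ∈ tsupport f
  · exact hf x hx
  · exact contDiffAt_const.congr_of_eventuallyEq (notMem_tsupport_iff_eventuallyEq.1 hx)

variable [MeasurableSpace E]

/-- A localized defining function `g` of `Ω`: a cutoff `ξ` supported in the domain `V` of `g`, and a
bound `A * (b - a)` for the measure of the slabs `{a ≤ g ≤ b}` inside the support of `ξ`. -/
structure BoundaryChart (μ : Measure E) (Ω : Set E) where
  V : Set E
  g : E → ℝ
  ξ : E → ℝ
  A : ℝ≥0
  isLocalDefiningFunction : IsLocalDefiningFunction Ω V g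
  isCutoff : IsCutoff ξ
  hasCompactSupport : HasCompactSupport ξ
  tsupport_subset : tsupport ξ ⊆ V
  measure_slab_le : ∀ a b, μ (tsupport ξ ∩ g ⁻¹' Icc a b) ≤ A * ENNReal.ofReal (b - a)

namespace BoundaryChart

variable {μ : Measure E} {Ω Q U : Set E} {X : E → E} (c : BoundaryChart μ Ω) {ε δ : ℝ}

/-- The cutoff of the inner boundary layer of width `ε`: it equals `ξ` where `g ≥ -ε / 2` and
vanishes where `g ≤ -ε`. -/
def layer (ε : ℝ) (x : E) : ℝ := c.ξ x * Real.smoothTransition (2 * (c.g x / ε + 1))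

lemma continuousOn_g : ContinuousOn c.g (tsupport c.ξ) :=
  c.isLocalDefiningFunction.contDiffOn.continuousOn.mono c.tsupport_subset

lemma continuousOn_fderiv_g : ContinuousOn (fderiv ℝ c.g) (tsupport c.ξ) :=
  (c.isLocalDefiningFunction.contDiffOn.continuousOn_fderiv_of_isOpen
    c.isLocalDefiningFunction.isOpen le_rfl).mono c.tsupport_subset

/-- The boundary points in `Q` seen by the chart at which `X` crosses `∂Ω` with speed at least
`δ`, as measured by the defining function. -/
def transversalSet (X : E → E) (Q : Set E) (δ : ℝ) : Set E :=
  {q ∈ frontier Ω ∩ Q ∩ tsupport c.ξ | δ ≤ |fderiv ℝ c.g q (X q)|}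

lemma isCompact_transversalSet (hX : ContinuousOn X (closure Ω)) (hQ : IsCompact Q) :
    IsCompact (c.transversalSet X Q δ) := by
  have hK : IsCompact (frontier Ω ∩ Q ∩ tsupport c.ξ) :=
    (hQ.inter_left isClosed_frontier).inter_right (isClosed_tsupport _)
  have hcont : ContinuousOn (fun q ↦ |fderiv ℝ c.g q (X q)|) (frontier Ω ∩ Q ∩ tsupport c.ξ) :=
    ((c.continuousOn_fderiv_g.mono fun q hq ↦ hq.2).clm_apply
      (hX.mono fun q hq ↦ frontier_subset_closure hq.1.1)).abs
  exact hK.of_isClosed_subset (hcont.preimage_isClosed_of_isClosed hK.isClosed isClosed_Ici)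
    (sep_subset _ _)

lemma transversalSet_subset (hδ : 0 < δ) :
    c.transversalSet X Q δ ⊆ nontangentialBoundary Ω X ∩ Q := by
  rintro q ⟨⟨⟨hqf, hqQ⟩, hqξ⟩, hq⟩
  refine ⟨⟨hqf, fun htan ↦ hq.not_gt ?_⟩, hqQ⟩
  simpa [htan _ _ (c.tsupport_subset hqξ) c.isLocalDefiningFunction] using hδ

lemma tsupport_layer_subset (hε : 0 < ε) :
    tsupport (c.layer ε) ⊆ tsupport c.ξ ∩ c.g ⁻¹' Ici (-ε) := by
  refine closure_minimal (fun x hx ↦ ⟨subset_tsupport _ (left_ne_zero_of_mul hx), ?_⟩)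
    (c.continuousOn_g.preimage_isClosed_of_isClosed (isClosed_tsupport _) isClosed_Ici)
  by_contra hgx
  refine right_ne_zero_of_mul hx (Real.smoothTransition.zero_of_nonpos ?_)
  have : c.g x / ε ≤ -1 := (div_le_iff₀ hε).2 (by simpa using (not_le.1 hgx).le)
  linarith

lemma hasFDerivAt_layer {x : E} (hx : x ∈ c.V) :
    HasFDerivAt (c.layer ε)
      (c.ξ x • (deriv Real.smoothTransition (2 * (c.g x / ε + 1)) * (2 * ε⁻¹)) • fderiv ℝ c.g x +
        Real.smoothTransition (2 * (c.g x / ε + 1)) • fderiv ℝ c.ξ x) x := by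
  have hg : HasFDerivAt (fun y ↦ 2 * (c.g y / ε + 1)) ((2 * ε⁻¹) • fderiv ℝ c.g x) x := by
    simp only [div_eq_inv_mul, ← smul_smul]
    exact (((c.isLocalDefiningFunction.differentiableAt hx).hasFDerivAt.const_mul ε⁻¹).add_const
      1).const_mul 2
  have hθ := (Real.smoothTransition.contDiff.differentiable one_ne_zero
    (2 * (c.g x / ε + 1))).hasDerivAt.comp_hasFDerivAt x hg
  rw [smul_smul] at hθ
  exact (c.isCutoff.differentiable x).hasFDerivAt.mul hθ

lemma isCutoff_layer (hε : 0 < ε) : IsCutoff (c.layer ε) where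
  contDiff := by
    refine contDiff_of_forall_mem_tsupport fun x hx ↦ ?_
    have hg := c.isLocalDefiningFunction.contDiffAt
      (c.tsupport_subset (c.tsupport_layer_subset hε hx).1)
    exact c.isCutoff.contDiff.contDiffAt.mul (Real.smoothTransition.contDiff.contDiffAt.comp x
      (contDiffAt_const.mul ((hg.div_const ε).add contDiffAt_const)))
  mem_Icc x := unitInterval.mul_mem (c.isCutoff.mem_Icc x)
    ⟨Real.smoothTransition.nonneg _, Real.smoothTransition.le_one _⟩

lemma layer_eventuallyEq_one (hΩ : IsOpen Ω) (hε : 0 < ε) {q : E} (hq : q ∈ frontier Ω)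
    (hξ : c.ξ =ᶠ[𝓝 q] 1) : c.layer ε =ᶠ[𝓝 q] 1 := by
  have hqV : q ∈ c.V := c.tsupport_subset (subset_tsupport _ (by simp [hξ.self_of_nhds]))
  have hg0 := c.isLocalDefiningFunction.eq_zero_of_mem_frontier hΩ hqV hq
  have hg : ∀ᶠ x in 𝓝 q, -(ε / 2) < c.g x :=
    (c.isLocalDefiningFunction.differentiableAt hqV).continuousAt.eventually_const_lt
      (by simpa [hg0] using hε)
  filter_upwards [hξ, hg] with x hξx hgx
  have : -(1 / 2) ≤ c.g x / ε := (le_div_iff₀ hε).2 (by linarith)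
  rw [layer, hξx, Real.smoothTransition.one_of_one_le (by linarith)]
  simp

lemma measure_inter_tsupport_layer_le (hε : 0 < ε) :
    μ (Ω ∩ tsupport (c.layer ε)) ≤ c.A * ENNReal.ofReal ε := by
  have hsub : Ω ∩ tsupport (c.layer ε) ⊆ tsupport c.ξ ∩ c.g ⁻¹' Icc (-ε) 0 := by
    rintro x ⟨hxΩ, hx⟩
    obtain ⟨hxξ, hgx⟩ := c.tsupport_layer_subset hε hx
    exact ⟨hxξ, hgx, ((c.isLocalDefiningFunction.mem_iff (c.tsupport_subset hxξ)).1 hxΩ).le⟩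
  simpa using (measure_mono hsub).trans (c.measure_slab_le _ _)

lemma enorm_fderiv_layer_apply_le {C : ℝ≥0} (hC : ∀ t, ‖deriv Real.smoothTransition t‖ₑ ≤ C)
    (hε : 0 < ε) {x : E} (hx : x ∈ c.V) (v : E) :
    ‖fderiv ℝ (c.layer ε) x v‖ₑ ≤
      2 * C * (ENNReal.ofReal ε)⁻¹ * ‖fderiv ℝ c.g x v‖ₑ + ‖fderiv ℝ c.ξ x v‖ₑ := by
  have hξ := c.isCutoff.mem_Icc x
  rw [(c.hasFDerivAt_layer hx).fderiv]
  simp only [add_apply, smul_apply, smul_eq_mul]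
  refine (enorm_add_le _ _).trans (add_le_add ?_ ?_)
  · rw [enorm_mul, enorm_mul, enorm_mul, enorm_mul, Real.enorm_of_nonneg (inv_nonneg.2 hε.le),
      ENNReal.ofReal_inv_of_pos hε, Real.enorm_of_nonneg hξ.1, Real.enorm_of_nonneg zero_le_two,
      ENNReal.ofReal_ofNat]
    calc _ ≤ 1 * (C * (2 * (ENNReal.ofReal ε)⁻¹) * ‖fderiv ℝ c.g x v‖ₑ) := by
          gcongr
          exacts [ENNReal.ofReal_le_one.2 hξ.2, hC _]
      _ = _ := by ring
  · rw [enorm_mul, Real.enorm_of_nonneg (Real.smoothTransition.nonneg _)]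
    exact mul_le_of_le_one_left zero_le (ENNReal.ofReal_le_one.2 (Real.smoothTransition.le_one _))

lemma exists_enorm_fderiv_ξ_le : ∃ S : ℝ≥0, ∀ x, ‖fderiv ℝ c.ξ x‖ₑ ≤ S := by
  obtain ⟨S, hS⟩ := (c.isCutoff.contDiff.continuous_fderiv
    one_ne_zero).bounded_above_of_compact_support (c.hasCompactSupport.fderiv ℝ)
  refine ⟨S.toNNReal, fun x ↦ ?_⟩
  rw [← ofReal_norm]
  exact ENNReal.ofReal_le_ofReal (hS x)

lemma eventually_abs_fderiv_lt (hΩ : IsOpen Ω) (hX : ContinuousOn X (closure Ω))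
    (hQ : IsCompact Q) (hU : IsOpen U)
    (hXδ : c.transversalSet X Q δ ⊆ U) :
    ∀ᶠ ε in 𝓝[>] (0 : ℝ), ∀ x ∈ tsupport c.ξ, x ∈ closure Ω → x ∈ Q → x ∉ U → -ε ≤ c.g x →
      |fderiv ℝ c.g x (X x)| < δ := by
  have hZ : IsCompact (Q ∩ (tsupport c.ξ ∩ closure Ω ∩ Uᶜ)) :=
    hQ.inter_right (((isClosed_tsupport _).inter isClosed_closure).inter hU.isClosed_compl)
  have hfrontier (x) (hxξ : x ∈ tsupport c.ξ) (hxΩ : x ∈ closure Ω) (hgx : 0 ≤ c.g x) :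
      x ∈ frontier Ω := by
    rw [hΩ.frontier_eq]
    exact ⟨hxΩ, mt (c.isLocalDefiningFunction.mem_iff (c.tsupport_subset hxξ)).1 hgx.not_gt⟩
  filter_upwards [eventually_forall_lt_of_isCompact hZ (F := fun x ↦ |fderiv ℝ c.g x (X x)|)
    ((c.continuousOn_fderiv_g.mono fun x hx ↦ hx.2.1.1).clm_apply (hX.mono fun x hx ↦ hx.2.1.2)).abs
    (c.continuousOn_g.mono fun x hx ↦ hx.2.1.1) fun x hx hgx ↦
      not_le.1 fun hδx ↦
        hx.2.2 (hXδ ⟨⟨⟨hfrontier x hx.2.1.1 hx.2.1.2 hgx, hx.1⟩, hx.2.1.1⟩, hδx⟩)]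
    with ε hε x hxξ hxΩ hxQ hxU hgx using hε x ⟨hxQ, ⟨hxξ, hxΩ⟩, hxU⟩ hgx

variable [BorelSpace E]

lemma eventually_lintegral_fderiv_layer_le (hΩ : IsOpen Ω) {C : ℝ≥0}
    (hC : ∀ t, ‖deriv Real.smoothTransition t‖ₑ ≤ C) (hX : ContinuousOn X (closure Ω))
    {M : ℝ≥0} (hM : ∀ x ∈ closure Ω, ‖X x‖ₑ ≤ M) (hQ : IsCompact Q) (hU : IsOpen U)
    (hδ : 0 < δ)
    (hXδ : c.transversalSet X Q δ ⊆ U) :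
    ∀ᶠ ε in 𝓝[>] (0 : ℝ), ∫⁻ x in (Ω ∩ Q) \ U, ‖fderiv ℝ (c.layer ε) x (X x)‖ₑ ∂μ ≤
      (2 * c.A * C + 1) * ENNReal.ofReal δ := by
  obtain ⟨S, hS⟩ := c.exists_enorm_fderiv_ξ_le
  have hfar : ∀ᶠ ε in 𝓝[>] (0 : ℝ), S * M * c.A * ENNReal.ofReal ε ≤ ENNReal.ofReal δ :=
    eventually_mul_ofReal_le (by finiteness) (ENNReal.ofReal_pos.2 hδ).ne'
  filter_upwards [hfar, c.eventually_abs_fderiv_lt hΩ hX hQ hU hXδ, self_mem_nhdsWithin]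
    with ε hfarε hnear hε
  have hpt (x) (hx : x ∈ (Ω ∩ Q) \ U) : ‖fderiv ℝ (c.layer ε) x (X x)‖ₑ ≤
      (Ω ∩ tsupport (c.layer ε)).indicator
        (fun _ ↦ 2 * C * (ENNReal.ofReal ε)⁻¹ * ENNReal.ofReal δ + S * M) x := by
    by_cases hxt : x ∈ tsupport (c.layer ε)
    swap; · simp [fderiv_of_notMem_tsupport ℝ hxt]
    obtain ⟨hxξ, hgx⟩ := c.tsupport_layer_subset hε hxt
    rw [indicator_of_mem (show x ∈ Ω ∩ tsupport (c.layer ε) from ⟨hx.1.1, hxt⟩)]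
    refine (c.enorm_fderiv_layer_apply_le hC hε (c.tsupport_subset hxξ) _).trans ?_
    gcongr
    · rw [← ofReal_norm, Real.norm_eq_abs]
      exact ENNReal.ofReal_le_ofReal (hnear x hxξ (subset_closure hx.1.1) hx.1.2 hx.2 hgx).le
    · exact (ContinuousLinearMap.le_opENorm _ _).trans
        (mul_le_mul' (hS x) (hM x (subset_closure hx.1.1)))
  calc ∫⁻ x in (Ω ∩ Q) \ U, ‖fderiv ℝ (c.layer ε) x (X x)‖ₑ ∂μ
      ≤ (2 * C * (ENNReal.ofReal ε)⁻¹ * ENNReal.ofReal δ + S * M) *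
          μ (Ω ∩ tsupport (c.layer ε)) :=
        (setLIntegral_mono' ((hΩ.measurableSet.inter hQ.measurableSet).diff hU.measurableSet)
          hpt).trans ((setLIntegral_le_lintegral _ _).trans (lintegral_indicator_const_le _ _))
    _ ≤ (2 * C * (ENNReal.ofReal ε)⁻¹ * ENNReal.ofReal δ + S * M) * (c.A * ENNReal.ofReal ε) := by
        gcongr; exact c.measure_inter_tsupport_layer_le hε
    _ = 2 * c.A * C * ENNReal.ofReal δ * ((ENNReal.ofReal ε)⁻¹ * ENNReal.ofReal ε) +
          S * M * c.A * ENNReal.ofReal ε := by ring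
    _ ≤ (2 * c.A * C + 1) * ENNReal.ofReal δ := by
        rw [ENNReal.inv_mul_cancel (ENNReal.ofReal_pos.2 hε).ne' ENNReal.ofReal_ne_top, mul_one,
          add_mul, one_mul]
        gcongr

end BoundaryChart

variable [BorelSpace E] {μ : Measure E} {Ω Q U : Set E} {X : E → E} {ι : Type*} [Fintype ι]
  (c : ι → BoundaryChart μ Ω)

lemma eventually_measure_inter_complProd_layer_ne_one_le (hΩ : IsOpen Ω) {τ : ℝ≥0∞} (hτ : τ ≠ 0) :
    ∀ᶠ ε in 𝓝[>] (0 : ℝ), μ (Ω ∩ {x | complProd (fun i ↦ (c i).layer ε) x ≠ 1}) ≤ τ := by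
  have hA : ∑ i, ((c i).A : ℝ≥0∞) ≠ ∞ := ENNReal.sum_ne_top.2 fun i _ ↦ by finiteness
  filter_upwards [eventually_mul_ofReal_le hA hτ, self_mem_nhdsWithin] with ε hετ hε
  calc μ (Ω ∩ {x | complProd (fun i ↦ (c i).layer ε) x ≠ 1})
      ≤ ∑ i, μ (Ω ∩ tsupport ((c i).layer ε)) := by
        simpa [Measure.restrict_apply', hΩ.measurableSet, inter_comm] using
          measure_setOf_complProd_ne_one_le (μ.restrict Ω) fun i ↦ (c i).layer ε
    _ ≤ (∑ i, ((c i).A : ℝ≥0∞)) * ENNReal.ofReal ε := by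
        rw [Finset.sum_mul]
        exact Finset.sum_le_sum fun i _ ↦ (c i).measure_inter_tsupport_layer_le hε
    _ ≤ τ := hετ

lemma eventually_lintegral_fderiv_complProd_layer_le (hΩ : IsOpen Ω) {C : ℝ≥0}
    (hC : ∀ t, ‖deriv Real.smoothTransition t‖ₑ ≤ C) (hX : ContinuousOn X (closure Ω))
    {M : ℝ≥0} (hM : ∀ x ∈ closure Ω, ‖X x‖ₑ ≤ M) (hQ : IsCompact Q) (hU : IsOpen U)
    {δ : ℝ} (hδ : 0 < δ) (hXδ : ∀ i, (c i).transversalSet X Q δ ⊆ U) :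
    ∀ᶠ ε in 𝓝[>] (0 : ℝ),
      ∫⁻ x in (Ω ∩ Q) \ U, ‖fderiv ℝ (complProd fun i ↦ (c i).layer ε) x (X x)‖ₑ ∂μ ≤
        (∑ i, (2 * (c i).A * C + 1 : ℝ≥0∞)) * ENNReal.ofReal δ := by
  have hlayer := eventually_all.2 fun i ↦
    (c i).eventually_lintegral_fderiv_layer_le hΩ hC hX hM hQ hU hδ (hXδ i)
  filter_upwards [hlayer, self_mem_nhdsWithin] with ε hε hεpos
  have hcut (i : ι) : IsCutoff ((c i).layer ε) := (c i).isCutoff_layer hεpos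
  have hmeas (i : ι) : AEMeasurable (fun x ↦ ‖fderiv ℝ ((c i).layer ε) x (X x)‖ₑ)
      (μ.restrict ((Ω ∩ Q) \ U)) := by
    refine (ContinuousOn.aemeasurable ?_
      ((hΩ.measurableSet.inter hQ.measurableSet).diff hU.measurableSet)).enorm
    exact ((hcut i).contDiff.continuous_fderiv one_ne_zero).continuousOn.clm_apply
      (hX.mono fun x hx ↦ subset_closure hx.1.1)
  calc ∫⁻ x in (Ω ∩ Q) \ U, ‖fderiv ℝ (complProd fun i ↦ (c i).layer ε) x (X x)‖ₑ ∂μ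
      ≤ ∑ i, ∫⁻ x in (Ω ∩ Q) \ U, ‖fderiv ℝ ((c i).layer ε) x (X x)‖ₑ ∂μ :=
        (lintegral_mono fun x ↦ enorm_fderiv_complProd_apply_le hcut x (X x)).trans_eq
          (lintegral_finsetSum' _ fun i _ ↦ hmeas i)
    _ ≤ (∑ i, (2 * (c i).A * C + 1 : ℝ≥0∞)) * ENNReal.ofReal δ := by
        rw [Finset.sum_mul]
        exact Finset.sum_le_sum fun i _ ↦ hε i

lemma lintegral_enorm_fderiv_mul_apply_le {η κ : E → ℝ} (hη : IsCutoff η) (hκ : IsCutoff κ)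
    (hU : MeasurableSet U) (hηU : ∀ x ∈ U, η x = 0) {M : ℝ≥0} {S : Set E} (hS : MeasurableSet S)
    (hM : ∀ x ∈ S, ‖X x‖ₑ ≤ M) :
    ∫⁻ x in S, ‖fderiv ℝ (η * κ) x (X x)‖ₑ ∂μ ≤
      M * ∫⁻ x, ‖fderiv ℝ η x‖ₑ ∂μ + ∫⁻ x in S \ U, ‖fderiv ℝ κ x (X x)‖ₑ ∂μ := by
  have hpt (x) (hx : x ∈ S) : ‖fderiv ℝ (η * κ) x (X x)‖ₑ ≤
      M * ‖fderiv ℝ η x‖ₑ + Uᶜ.indicator (fun y ↦ ‖fderiv ℝ κ y (X y)‖ₑ) x := by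
    rw [fderiv_mul (hη.differentiable x) (hκ.differentiable x), add_comm (_ * _)]
    simp only [add_apply, smul_apply, smul_eq_mul]
    refine (enorm_add_le _ _).trans (add_le_add ?_ ?_)
    · by_cases hxU : x ∈ U
      · simp [hηU x hxU]
      rw [indicator_of_mem (show x ∈ Uᶜ from hxU), enorm_mul, Real.enorm_of_nonneg (hη.mem_Icc x).1]
      exact mul_le_of_le_one_left zero_le (ENNReal.ofReal_le_one.2 (hη.mem_Icc x).2)
    · rw [enorm_mul, Real.enorm_of_nonneg (hκ.mem_Icc x).1]
      refine (mul_le_of_le_one_left zero_le (ENNReal.ofReal_le_one.2 (hκ.mem_Icc x).2)).trans ?_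
      rw [mul_comm]
      exact (ContinuousLinearMap.le_opENorm _ _).trans (by gcongr; exact hM x hx)
  refine (setLIntegral_mono' hS hpt).trans ?_
  rw [lintegral_add_left ((measurable_fderiv ℝ η).enorm.const_mul _),
    lintegral_const_mul _ (measurable_fderiv ℝ η).enorm, setLIntegral_indicator hU.compl,
    inter_comm Uᶜ, sdiff_eq]
  gcongr
  exact Measure.restrict_le_self

end Layer

section BoundaryCutoff

variable {E : Type*} [NormedAddCommGroup E] [NormedSpace ℝ E] [FiniteDimensional ℝ E]
  [MeasurableSpace E] [BorelSpace E] {Ω Q : Set E} {X : E → E}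

lemma exists_boundaryChart (μ : Measure E) [μ.IsAddHaarMeasure] (hΩ : HasC1Boundary Ω) {p : E}
    (hp : p ∈ frontier Ω) : ∃ c : BoundaryChart μ Ω, c.ξ =ᶠ[𝓝 p] 1 := by
  obtain ⟨V, g, hpV, hg⟩ := hΩ p hp
  obtain ⟨r, hr, A, hA⟩ := exists_measure_closedBall_inter_preimage_Icc_le μ
    ((hg.contDiffAt hpV).hasStrictFDerivAt one_ne_zero) (hg.fderiv_ne_zero p hpV)
  obtain ⟨s, hs, hsV⟩ := nhds_basis_closedBall.mem_iff.1 (hg.isOpen.mem_nhds hpV)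
  have hpos : 0 < 2 / 3 * min r s := by positivity
  have hsupp : tsupport (ballBump p hpos) = closedBall p (min r s) := by
    rw [ContDiffBump.tsupport_eq]
    congr 1
    simp only [ballBump]
    ring
  exact ⟨{
    V := V
    g := g
    ξ := ballBump p hpos
    A := A
    isLocalDefiningFunction := hg
    isCutoff := .ballBump p hpos
    hasCompactSupport := (ballBump p hpos).hasCompactSupport
    tsupport_subset := hsupp.trans_subset
      ((closedBall_subset_closedBall (min_le_right r s)).trans hsV)
    measure_slab_le := fun a b ↦ by
      refine (measure_mono (inter_subset_inter_left _ ?_)).trans (hA a b)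
      exact hsupp.trans_subset (closedBall_subset_closedBall (min_le_left r s)) },
    (ballBump p hpos).eventuallyEq_one⟩

lemma exists_finite_boundaryChart (μ : Measure E) [μ.IsAddHaarMeasure] (hΩ : HasC1Boundary Ω)
    (hQ : IsCompact Q) : ∃ (s : Finset E) (c : s → BoundaryChart μ Ω),
      ∀ q ∈ frontier Ω ∩ Q, ∃ i, (c i).ξ =ᶠ[𝓝 q] 1 := by
  classical
  choose c hc using fun p : ↥(frontier Ω ∩ Q) ↦ exists_boundaryChart μ hΩ p.2.1
  obtain ⟨t, ht⟩ := (hQ.inter_left isClosed_frontier).elim_nhds_subcover'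
    (fun p hp ↦ {x | (c ⟨p, hp⟩).ξ =ᶠ[𝓝 x] 1})
    fun p hp ↦ eventually_eventually_nhds.2 (hc ⟨p, hp⟩)
  have hmem (i : ↥(t.map (.subtype _))) : (i : E) ∈ frontier Ω ∩ Q := by
    obtain ⟨⟨q, hq⟩, -, hqi⟩ := Finset.mem_map.1 i.2
    exact hqi ▸ hq
  refine ⟨t.map (.subtype _), fun i ↦ c ⟨i, hmem i⟩, fun q hq ↦ ?_⟩
  obtain ⟨p, hpt, hqp⟩ := mem_iUnion₂.1 (ht hq)
  exact ⟨⟨p, Finset.mem_map_of_mem _ hpt⟩, hqp⟩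

lemma exists_isCompact_forall_cutoff_layers (μ : Measure E) [μ.IsAddHaarMeasure] (hΩ : IsOpen Ω)
    (hΩ' : HasC1Boundary Ω) (hQ : IsCompact Q) (hX : ContinuousOn X (closure Ω)) {M : ℝ≥0}
    (hM : ∀ x ∈ closure Ω, ‖X x‖ₑ ≤ M) {τ : ℝ≥0∞} (hτ : τ ≠ 0) :
    ∃ K, IsCompact K ∧ K ⊆ nontangentialBoundary Ω X ∩ Q ∧ ∀ U, IsOpen U → K ⊆ U →
      ∃ κ : E → ℝ, IsCutoff κ ∧ (∀ q ∈ frontier Ω ∩ Q, κ =ᶠ[𝓝 q] 0) ∧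
        μ (Ω ∩ {x | κ x ≠ 1}) ≤ τ ∧ ∫⁻ x in (Ω ∩ Q) \ U, ‖fderiv ℝ κ x (X x)‖ₑ ∂μ ≤ τ := by
  obtain ⟨C, hC⟩ := exists_enorm_deriv_smoothTransition_le
  obtain ⟨s, c, hc⟩ := exists_finite_boundaryChart μ hΩ' hQ
  have hB : ∑ i, (2 * (c i).A * C + 1 : ℝ≥0∞) ≠ ∞ := ENNReal.sum_ne_top.2 fun i _ ↦ by finiteness
  obtain ⟨δ, hδτ, hδ⟩ := ((eventually_mul_ofReal_le hB hτ).and self_mem_nhdsWithin).exists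
  refine ⟨⋃ i, (c i).transversalSet X Q δ,
    isCompact_iUnion fun i ↦ (c i).isCompact_transversalSet hX hQ,
    iUnion_subset fun i ↦ (c i).transversalSet_subset hδ, fun U hU hKU ↦ ?_⟩
  obtain ⟨ε, hε1, hDε, hε⟩ := ((eventually_measure_inter_complProd_layer_ne_one_le c hΩ hτ).and
    ((eventually_lintegral_fderiv_complProd_layer_le c hΩ hC hX hM hQ hU hδ
      (iUnion_subset_iff.1 hKU)).and self_mem_nhdsWithin)).exists
  refine ⟨complProd fun i ↦ (c i).layer ε, .complProd fun i ↦ (c i).isCutoff_layer hε,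
    fun q hq ↦ ?_, hε1, hDε.trans hδτ⟩
  obtain ⟨i, hi⟩ := hc q hq
  filter_upwards [(c i).layer_eventuallyEq_one hΩ hε hq.1 hi] with x hx
  exact complProd_eq_zero (h := fun i ↦ (c i).layer ε) hx

lemma exists_cutoff_eq_zero_near_frontier [Nontrivial E] (μ : Measure E) [μ.IsAddHaarMeasure] :
    ∃ C : ℝ≥0, ∀ (Ω Q : Set E) (X : E → E) (M : ℝ≥0), IsOpen Ω → HasC1Boundary Ω → IsCompact Q →
      ContinuousOn X (closure Ω) → (∀ x ∈ closure Ω, ‖X x‖ₑ ≤ M) →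
      μH[(finrank ℝ E : ℝ) - 1] (nontangentialBoundary Ω X ∩ Q) ≠ ∞ → ∀ τ : ℝ≥0∞, τ ≠ 0 →
      ∃ χ : E → ℝ, IsCutoff χ ∧ (∀ q ∈ frontier Ω ∩ Q, χ =ᶠ[𝓝 q] 0) ∧
        μ (Ω ∩ {x | χ x ≠ 1}) ≤ τ ∧
        ∫⁻ x in Ω ∩ Q, ‖fderiv ℝ χ x (X x)‖ₑ ∂μ ≤
          C * M * μH[(finrank ℝ E : ℝ) - 1] (nontangentialBoundary Ω X ∩ Q) + τ := by
  obtain ⟨C, hC⟩ := exists_cutoff_eq_zero_near_isCompact μ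
  refine ⟨C, fun Ω Q X M hΩ hΩ' hQ hX hM hfin τ hτ ↦ ?_⟩
  obtain ⟨t, htτ, ht⟩ := ((eventually_mul_ofReal_le (A := M + 2) (by finiteness) hτ).and
    self_mem_nhdsWithin).exists
  set σ := ENNReal.ofReal t
  have hσ : σ ≠ 0 := (ENNReal.ofReal_pos.2 ht).ne'
  obtain ⟨K, hK, hKsub, hlayers⟩ := exists_isCompact_forall_cutoff_layers μ hΩ hΩ' hQ hX hM hσ
  obtain ⟨η, U, hη, hU, hKU, hηU, hη1, hDη⟩ := hC K hK (measure_ne_top_of_subset hKsub hfin) σ hσ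
  obtain ⟨κ, hκ, hκ0, hκ1, hDκ⟩ := hlayers U hU hKU
  refine ⟨η * κ, hη.mul hκ, fun q hq ↦ ?_, ?_, ?_⟩
  · filter_upwards [hκ0 q hq] with x hx
    simp [hx]
  · have hsub : Ω ∩ {x | (η * κ) x ≠ 1} ⊆ {x | η x ≠ 1} ∪ (Ω ∩ {x | κ x ≠ 1}) := by
      rintro x ⟨hxΩ, hx⟩
      by_contra! h
      simp_all
    calc μ (Ω ∩ {x | (η * κ) x ≠ 1}) ≤ μ {x | η x ≠ 1} + μ (Ω ∩ {x | κ x ≠ 1}) :=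
          (measure_mono hsub).trans (measure_union_le _ _)
      _ ≤ σ + σ := add_le_add hη1 hκ1
      _ ≤ τ := (two_mul σ).symm.trans_le (le_trans (by gcongr; exact le_add_self) htτ)
  · calc ∫⁻ x in Ω ∩ Q, ‖fderiv ℝ (η * κ) x (X x)‖ₑ ∂μ
        ≤ M * ∫⁻ x, ‖fderiv ℝ η x‖ₑ ∂μ + ∫⁻ x in (Ω ∩ Q) \ U, ‖fderiv ℝ κ x (X x)‖ₑ ∂μ :=
          lintegral_enorm_fderiv_mul_apply_le hη hκ hU.measurableSet hηU
            (hΩ.measurableSet.inter hQ.measurableSet) fun x hx ↦ hM x (subset_closure hx.1)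
      _ ≤ M * (C * μH[(finrank ℝ E : ℝ) - 1] (nontangentialBoundary Ω X ∩ Q) + σ) + σ := by
          gcongr
          exact hDη.trans (by gcongr)
      _ = C * M * μH[(finrank ℝ E : ℝ) - 1] (nontangentialBoundary Ω X ∩ Q) + (M + 1) * σ := by
          ring
      _ ≤ _ := by
          gcongr
          exact le_trans (by gcongr; exact one_le_two) htτ

end BoundaryCutoff

section Flux

lemma tsupport_indicator_mul_subset {α : Type*} [TopologicalSpace α] {Ω Q : Set α} {φ χ : α → ℝ}
    (hQ : IsClosed Q) (hφQ : ∀ x ∈ Ω, x ∉ Q → φ x = 0)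
    (hχ : ∀ q ∈ frontier Ω ∩ Q, χ =ᶠ[𝓝 q] 0) : tsupport (Ω.indicator (φ * χ)) ⊆ Ω ∩ Q := by
  intro x hx
  have hsub : support (Ω.indicator (φ * χ)) ⊆ Ω ∩ Q := fun y hy ↦
    have hyΩ := mem_of_indicator_ne_zero hy
    ⟨hyΩ, by_contra fun hyQ ↦ hy (by simp [hφQ y hyΩ hyQ])⟩
  have hxQ : x ∈ Q := hQ.closure_subset_iff.2 (hsub.trans inter_subset_right) hx
  refine ⟨by_contra fun hxΩ ↦ ?_, hxQ⟩
  have hxf : x ∈ frontier Ω :=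
    ⟨closure_mono (hsub.trans inter_subset_left) hx, fun h ↦ hxΩ (interior_subset h)⟩
  refine notMem_tsupport_iff_eventuallyEq.2 ?_ hx
  filter_upwards [hχ x ⟨hxf, hxQ⟩] with y hy
  simp [hy]

lemma integrableOn_of_enorm_le {α : Type*} [TopologicalSpace α] [T2Space α] [MeasurableSpace α]
    [OpensMeasurableSpace α] {μ : Measure α} [IsFiniteMeasureOnCompacts μ] {Ω Q : Set α}
    (hΩ : IsOpen Ω) (hQ : IsCompact Q) {f : α → ℝ}
    (hf : ContinuousOn f Ω) (hfQ : ∀ x ∈ Ω, x ∉ Q → f x = 0) {m : ℝ≥0}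
    (hm : ∀ x ∈ Ω, ‖f x‖ₑ ≤ m) : IntegrableOn f Ω μ := by
  have hΩQ := hΩ.measurableSet.inter hQ.measurableSet
  have hint : IntegrableOn f (Ω ∩ Q) μ := by
    refine .of_bound ((measure_mono inter_subset_right).trans_lt hQ.measure_lt_top)
      ((hf.mono inter_subset_left).aestronglyMeasurable hΩQ) m ?_
    filter_upwards [ae_restrict_mem hΩQ] with x hx
    exact_mod_cast enorm_le_coe.1 (hm x hx.1)
  exact hint.of_forall_sdiff_eq_zero hΩ.measurableSet fun x hx ↦
    hfQ x hx.1 fun hxQ ↦ hx.2 ⟨hx.1, hxQ⟩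

variable {E : Type*} [NormedAddCommGroup E] [NormedSpace ℝ E] {Ω Q : Set E} {φ χ : E → ℝ}

lemma contDiff_indicator_mul (hΩ : IsOpen Ω) (hφ : ContDiffOn ℝ 1 φ Ω) (hχ : ContDiff ℝ 1 χ)
    (hsupp : tsupport (Ω.indicator (φ * χ)) ⊆ Ω) : ContDiff ℝ 1 (Ω.indicator (φ * χ)) := by
  refine contDiff_of_forall_mem_tsupport fun x hx ↦ ?_
  have hxΩ := hΩ.mem_nhds (hsupp hx)
  refine ((hφ.contDiffAt hxΩ).mul hχ.contDiffAt).congr_of_eventuallyEq ?_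
  filter_upwards [hxΩ] with y hy using indicator_of_mem hy _

lemma fderiv_indicator_mul_apply (hΩ : IsOpen Ω) (hφ : ContDiffOn ℝ 1 φ Ω) (hχ : IsCutoff χ) {x : E}
    (hx : x ∈ Ω) (v : E) :
    fderiv ℝ (Ω.indicator (φ * χ)) x v = χ x * fderiv ℝ φ x v + φ x * fderiv ℝ χ x v := by
  have heq : Ω.indicator (φ * χ) =ᶠ[𝓝 x] φ * χ := by
    filter_upwards [hΩ.mem_nhds hx] with y hy using indicator_of_mem hy _
  rw [heq.fderiv_eq, fderiv_mul
    ((hφ.contDiffAt (hΩ.mem_nhds hx)).differentiableAt one_ne_zero) (hχ.differentiable x), add_comm]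
  simp

lemma enorm_fderiv_sub_fderiv_indicator_mul_apply_le (hΩ : IsOpen Ω) (hφ : ContDiffOn ℝ 1 φ Ω)
    {P m : ℝ≥0} (hφP : ∀ x ∈ Ω, φ x ∈ Icc (0 : ℝ) P) (hφQ : ∀ x ∈ Ω, x ∉ Q → φ x = 0)
    (hχ : IsCutoff χ) {X : E → E} (hm : ∀ x ∈ Ω, ‖fderiv ℝ φ x (X x)‖ₑ ≤ m) {x : E} (hx : x ∈ Ω) :
    ‖fderiv ℝ φ x (X x) - fderiv ℝ (Ω.indicator (φ * χ)) x (X x)‖ₑ ≤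
      {x | χ x ≠ 1}.indicator (fun _ ↦ (m : ℝ≥0∞)) x +
        Q.indicator (fun y ↦ P * ‖fderiv ℝ χ y (X y)‖ₑ) x := by
  have hsub : fderiv ℝ φ x (X x) - fderiv ℝ (Ω.indicator (φ * χ)) x (X x) =
      (1 - χ x) * fderiv ℝ φ x (X x) - φ x * fderiv ℝ χ x (X x) := by
    rw [fderiv_indicator_mul_apply hΩ hφ hχ hx]
    ring
  rw [hsub]
  refine enorm_sub_le.trans (add_le_add ?_ ?_)
  · by_cases hχ1 : χ x = 1
    · simp [hχ1]
    have h1χ := Icc.mem_iff_one_sub_mem.1 (hχ.mem_Icc x)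
    rw [indicator_of_mem (by exact hχ1), enorm_mul, Real.enorm_of_nonneg h1χ.1]
    exact (mul_le_of_le_one_left zero_le (ENNReal.ofReal_le_one.2 h1χ.2)).trans (hm x hx)
  · by_cases hxQ : x ∈ Q
    · rw [indicator_of_mem hxQ, enorm_mul, Real.enorm_of_nonneg (hφP x hx).1]
      gcongr
      simpa using ENNReal.ofReal_le_ofReal (hφP x hx).2
    · simp [hφQ x hx hxQ]

lemma fderiv_eq_zero_of_notMem (hΩ : IsOpen Ω) (hQ : IsClosed Q)
    (hφQ : ∀ x ∈ Ω, x ∉ Q → φ x = 0) {x : E} (hx : x ∈ Ω) (hxQ : x ∉ Q) : fderiv ℝ φ x = 0 := by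
  have heq : φ =ᶠ[𝓝 x] fun _ ↦ 0 := by
    filter_upwards [hΩ.mem_nhds hx, hQ.isOpen_compl.mem_nhds hxQ] with y hy hyQ using hφQ y hy hyQ
  simp [heq.fderiv_eq]

variable [MeasurableSpace E]

/-- `div X ≥ 0` on `Ω` in the weak sense, tested against nonnegative `C¹` functions with compact
support in `Ω`. -/
def HasNonnegDivergence (μ : Measure E) (Ω : Set E) (X : E → E) : Prop :=
  ∀ φ : E → ℝ, ContDiff ℝ 1 φ → HasCompactSupport φ → tsupport φ ⊆ Ω → (∀ x, 0 ≤ φ x) →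
    ∫ x in Ω, fderiv ℝ φ x (X x) ∂μ ≤ 0

variable {μ : Measure E} {X : E → E}

lemma HasNonnegDivergence.congr {Y : E → E} (hX : HasNonnegDivergence μ Ω X)
    (hΩ : MeasurableSet Ω) (hXY : EqOn X Y Ω) : HasNonnegDivergence μ Ω Y := by
  intro φ hφ hφc hφΩ hφ0
  rw [← setIntegral_congr_fun hΩ fun x hx ↦ congrArg (fderiv ℝ φ x) (hXY hx)]
  exact hX φ hφ hφc hφΩ hφ0

lemma setIntegral_fderiv_indicator_mul_nonpos (hΩ : IsOpen Ω) (hX : HasNonnegDivergence μ Ω X)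
    (hQ : IsCompact Q) (hφ : ContDiffOn ℝ 1 φ Ω) (hφ0 : ∀ x ∈ Ω, 0 ≤ φ x)
    (hφQ : ∀ x ∈ Ω, x ∉ Q → φ x = 0) (hχ : IsCutoff χ)
    (hχQ : ∀ q ∈ frontier Ω ∩ Q, χ =ᶠ[𝓝 q] 0) :
    ∫ x in Ω, fderiv ℝ (Ω.indicator (φ * χ)) x (X x) ∂μ ≤ 0 := by
  have hsupp := tsupport_indicator_mul_subset hQ.isClosed hφQ hχQ
  exact hX _ (contDiff_indicator_mul hΩ hφ hχ.contDiff (hsupp.trans inter_subset_left))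
    (hQ.of_isClosed_subset (isClosed_tsupport _) (hsupp.trans inter_subset_right))
    (hsupp.trans inter_subset_left)
    (indicator_nonneg fun x hx ↦ mul_nonneg (hφ0 x hx) (hχ.mem_Icc x).1)

variable [BorelSpace E] [IsFiniteMeasureOnCompacts μ]

lemma integrable_fderiv_apply_of_hasCompactSupport (hX : ContinuousOn X Ω) (hφ : ContDiff ℝ 1 φ)
    (hφc : HasCompactSupport φ) (hφΩ : tsupport φ ⊆ Ω) :
    Integrable (fun x ↦ fderiv ℝ φ x (X x)) μ := by
  have hcont : ContinuousOn (fun x ↦ fderiv ℝ φ x (X x)) (tsupport φ) :=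
    (hφ.continuous_fderiv one_ne_zero).continuousOn.clm_apply (hX.mono hφΩ)
  refine (hcont.integrableOn_compact hφc).integrable_of_forall_notMem_eq_zero fun x hx ↦ ?_
  simp [fderiv_of_notMem_tsupport ℝ hx]

lemma integrableOn_fderiv_apply (hΩ : IsOpen Ω) (hX : ContinuousOn X Ω) (hQ : IsCompact Q)
    (hφ : ContDiffOn ℝ 1 φ Ω) (hφQ : ∀ x ∈ Ω, x ∉ Q → φ x = 0) {m : ℝ≥0}
    (hm : ∀ x ∈ Ω, ‖fderiv ℝ φ x (X x)‖ₑ ≤ m) :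
    IntegrableOn (fun x ↦ fderiv ℝ φ x (X x)) Ω μ :=
  integrableOn_of_enorm_le hΩ hQ ((hφ.continuousOn_fderiv_of_isOpen hΩ le_rfl).clm_apply hX)
    (fun x hx hxQ ↦ by simp [fderiv_eq_zero_of_notMem hΩ hQ.isClosed hφQ hx hxQ]) hm

lemma ofReal_setIntegral_fderiv_le (hΩ : IsOpen Ω) (hX : ContinuousOn X Ω)
    (hdiv : HasNonnegDivergence μ Ω X) (hQ : IsCompact Q) (hφ : ContDiffOn ℝ 1 φ Ω) {P m : ℝ≥0}
    (hφP : ∀ x ∈ Ω, φ x ∈ Icc (0 : ℝ) P) (hφQ : ∀ x ∈ Ω, x ∉ Q → φ x = 0)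
    (hm : ∀ x ∈ Ω, ‖fderiv ℝ φ x (X x)‖ₑ ≤ m)
    (hχ : IsCutoff χ) (hχQ : ∀ q ∈ frontier Ω ∩ Q, χ =ᶠ[𝓝 q] 0) :
    ENNReal.ofReal (∫ x in Ω, fderiv ℝ φ x (X x) ∂μ) ≤
      m * μ (Ω ∩ {x | χ x ≠ 1}) + P * ∫⁻ x in Ω ∩ Q, ‖fderiv ℝ χ x (X x)‖ₑ ∂μ := by
  set T := fun x ↦ fderiv ℝ (Ω.indicator (φ * χ)) x (X x)
  have hT : IntegrableOn T Ω μ := by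
    have hsupp := tsupport_indicator_mul_subset hQ.isClosed hφQ hχQ
    exact (integrable_fderiv_apply_of_hasCompactSupport hX
      (contDiff_indicator_mul hΩ hφ hχ.contDiff (hsupp.trans inter_subset_left))
      (hQ.of_isClosed_subset (isClosed_tsupport _) (hsupp.trans inter_subset_right))
      (hsupp.trans inter_subset_left)).integrableOn
  have hTle : ∫ x in Ω, T x ∂μ ≤ 0 := setIntegral_fderiv_indicator_mul_nonpos hΩ hdiv hQ hφ
    (fun x hx ↦ (hφP x hx).1) hφQ hχ hχQ
  have hmeas : MeasurableSet {x | χ x ≠ 1} :=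
    (isClosed_singleton.preimage hχ.continuous).isOpen_compl.measurableSet
  calc ENNReal.ofReal (∫ x in Ω, fderiv ℝ φ x (X x) ∂μ)
      ≤ ENNReal.ofReal (∫ x in Ω, (fderiv ℝ φ x (X x) - T x) ∂μ) := by
        rw [integral_sub (integrableOn_fderiv_apply hΩ hX hQ hφ hφQ hm) hT]
        gcongr
        linarith
    _ ≤ ∫⁻ x in Ω, ‖fderiv ℝ φ x (X x) - T x‖ₑ ∂μ :=
        (Real.ofReal_le_enorm _).trans (enorm_integral_le_lintegral_enorm _)
    _ ≤ ∫⁻ x in Ω, ({x | χ x ≠ 1}.indicator (fun _ ↦ (m : ℝ≥0∞)) x +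
          Q.indicator (fun y ↦ P * ‖fderiv ℝ χ y (X y)‖ₑ) x) ∂μ :=
        setLIntegral_mono' hΩ.measurableSet fun x hx ↦
          enorm_fderiv_sub_fderiv_indicator_mul_apply_le hΩ hφ hφP hφQ hχ hm hx
    _ = m * μ (Ω ∩ {x | χ x ≠ 1}) + P * ∫⁻ x in Ω ∩ Q, ‖fderiv ℝ χ x (X x)‖ₑ ∂μ := by
        rw [lintegral_add_left (measurable_const.indicator hmeas), lintegral_indicator_const hmeas,
          setLIntegral_indicator hQ.measurableSet, lintegral_const_mul' _ _ ENNReal.coe_ne_top,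
          Measure.restrict_apply hmeas, inter_comm Q, inter_comm Ω {x | χ x ≠ 1}]

variable [FiniteDimensional ℝ E] [Nontrivial E]

lemma exists_ofReal_setIntegral_fderiv_le
    (μ : Measure E) [μ.IsAddHaarMeasure] :
    ∃ C : ℝ≥0, ∀ (Ω Q : Set E) (X : E → E) (M : ℝ≥0), IsOpen Ω → HasC1Boundary Ω → IsCompact Q →
      ContinuousOn X (closure Ω) → (∀ x ∈ closure Ω, ‖X x‖ₑ ≤ M) → HasNonnegDivergence μ Ω X →
      μH[(finrank ℝ E : ℝ) - 1] (nontangentialBoundary Ω X ∩ Q) ≠ ∞ →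
      ∀ (φ : E → ℝ) (P m : ℝ≥0), ContDiffOn ℝ 1 φ Ω → (∀ x ∈ Ω, φ x ∈ Icc (0 : ℝ) P) →
        (∀ x ∈ Ω, x ∉ Q → φ x = 0) → (∀ x ∈ Ω, ‖fderiv ℝ φ x (X x)‖ₑ ≤ m) →
        ENNReal.ofReal (∫ x in Ω, fderiv ℝ φ x (X x) ∂μ) ≤
          P * (C * M * μH[(finrank ℝ E : ℝ) - 1] (nontangentialBoundary Ω X ∩ Q)) := by
  obtain ⟨C, hC⟩ := exists_cutoff_eq_zero_near_frontier μ
  refine ⟨C, fun Ω Q X M hΩ hΩ' hQ hX hM hdiv hfin φ P m hφ hφP hφQ hm ↦ ?_⟩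
  refine ENNReal.le_of_forall_pos_le_add fun σ hσ _ ↦ ?_
  obtain ⟨t, htσ, ht⟩ := ((eventually_mul_ofReal_le (A := m + P) (by finiteness)
    (ENNReal.coe_ne_zero.2 hσ.ne')).and self_mem_nhdsWithin).exists
  obtain ⟨χ, hχ, hχ0, hχ1, hDχ⟩ := hC Ω Q X M hΩ hΩ' hQ hX hM hfin _ (ENNReal.ofReal_pos.2 ht).ne'
  calc ENNReal.ofReal (∫ x in Ω, fderiv ℝ φ x (X x) ∂μ)
      ≤ m * μ (Ω ∩ {x | χ x ≠ 1}) + P * ∫⁻ x in Ω ∩ Q, ‖fderiv ℝ χ x (X x)‖ₑ ∂μ :=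
        ofReal_setIntegral_fderiv_le hΩ (hX.mono subset_closure) hdiv hQ hφ hφP hφQ hm hχ hχ0
    _ ≤ m * ENNReal.ofReal t + P *
          (C * M * μH[(finrank ℝ E : ℝ) - 1] (nontangentialBoundary Ω X ∩ Q) +
            ENNReal.ofReal t) := by
        gcongr
    _ = P * (C * M * μH[(finrank ℝ E : ℝ) - 1] (nontangentialBoundary Ω X ∩ Q)) +
          (m + P) * ENNReal.ofReal t := by ring
    _ ≤ _ := by gcongr

end Flux

section Calibration

/-- A bounded increasing function with slope at least `1 / 2` on `[-R, R]`. -/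
def arctanProfile (R s : ℝ) : ℝ := R * (Real.arctan (s / R) + Real.pi / 2)

lemma arctanProfile_mem_Icc {R : ℝ} (hR : 0 < R) (s : ℝ) :
    arctanProfile R s ∈ Icc 0 (Real.pi * R) := by
  have h₁ := Real.neg_pi_div_two_lt_arctan (s / R)
  have h₂ := Real.arctan_lt_pi_div_two (s / R)
  exact ⟨mul_nonneg hR.le (by linarith), by rw [arctanProfile, mul_comm]; gcongr; linarith⟩

lemma hasDerivAt_arctanProfile {R : ℝ} (hR : R ≠ 0) (s : ℝ) :
    HasDerivAt (arctanProfile R) (1 + (s / R) ^ 2)⁻¹ s := by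
  have h := ((((hasDerivAt_id s).div_const R).arctan.add_const (Real.pi / 2)).const_mul R)
  refine h.congr_deriv ?_
  rw [mul_left_comm, mul_one_div_cancel hR, mul_one, one_div, id]

lemma one_half_le_inv_one_add_div_sq {R s : ℝ} (hs : |s| ≤ R) :
    1 / 2 ≤ (1 + (s / R) ^ 2)⁻¹ := by
  have : (s / R) ^ 2 ≤ 1 := by
    rw [div_pow, ← sq_abs]
    exact div_le_one_of_le₀ (by gcongr) (sq_nonneg R)
  rw [one_div]
  gcongr
  linarith

lemma measurableSet_inter_sqrt_le {E : Type*} [SeminormedAddCommGroup E] [MeasurableSpace E]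
    [OpensMeasurableSpace E] {Ω : Set E} {u : E → ℝ} (hΩ : IsOpen Ω) (hu : ContinuousOn u Ω)
    (R : ℝ) :
    MeasurableSet (Ω ∩ {x | √(‖x‖ ^ 2 + u x ^ 2) ≤ R}) := by
  have hopen : IsOpen (Ω ∩ (fun x ↦ √(‖x‖ ^ 2 + u x ^ 2)) ⁻¹' Ioi R) :=
    ((continuous_norm.pow 2).continuousOn.add (hu.pow 2)).sqrt.isOpen_inter_preimage hΩ isOpen_Ioi
  convert hΩ.measurableSet.diff hopen.measurableSet using 1
  ext x
  simp +contextual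

variable {E : Type*} [NormedAddCommGroup E] [NormedSpace ℝ E]

lemma contDiffOn_one_of_hasFDerivAt {Ω : Set E} {u : E → ℝ} {D : E → E →L[ℝ] ℝ} (hΩ : IsOpen Ω)
    (hu : ∀ x ∈ Ω, HasFDerivAt u (D x) x) (hD : ContinuousOn D Ω) : ContDiffOn ℝ 1 u Ω := by
  rw [← zero_add 1, contDiffOn_succ_iff_fderiv_of_isOpen hΩ]
  exact ⟨fun x hx ↦ (hu x hx).differentiableAt.differentiableWithinAt, by simp,
    contDiffOn_zero.2 (hD.congr fun x hx ↦ (hu x hx).fderiv)⟩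

variable [FiniteDimensional ℝ E]

/-- The calibrating test function: a bounded increasing function of `u`, localized to a ball. -/
def calibration {R : ℝ} (hR : 0 < R) (u : E → ℝ) (x : E) : ℝ :=
  ballBump (0 : E) hR x * arctanProfile R (u x)

/-- The part of the derivative of `calibration` along `X` in which the factor depending on `u` is
differentiated, with `D` standing for the differential of `u`. -/
def calibrationEnergy {R : ℝ} (hR : 0 < R) (u : E → ℝ) (D : E → E →L[ℝ] ℝ) (X : E → E)
    (x : E) : ℝ :=
  ballBump (0 : E) hR x * ((1 + (u x / R) ^ 2)⁻¹ * D x (X x))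

variable {R : ℝ} (hR : 0 < R) {u : E → ℝ} {D : E → E →L[ℝ] ℝ} {X : E → E} {Ω : Set E} {M C : ℝ≥0}

lemma fderiv_calibration_apply {x : E} (hu : HasFDerivAt u (D x) x) :
    fderiv ℝ (calibration hR u) x (X x) = calibrationEnergy hR u D X x +
      arctanProfile R (u x) * fderiv ℝ (ballBump (0 : E) hR) x (X x) := by
  have h : HasFDerivAt (calibration hR u) (ballBump (0 : E) hR x • (1 + (u x / R) ^ 2)⁻¹ • D x +
      arctanProfile R (u x) • fderiv ℝ (ballBump (0 : E) hR) x) x :=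
    ((IsCutoff.ballBump 0 hR).differentiable x).hasFDerivAt.mul
      ((hasDerivAt_arctanProfile hR.ne' (u x)).comp_hasFDerivAt x hu)
  simp [h.fderiv, calibrationEnergy]

lemma contDiffOn_calibration (hu : ContDiffOn ℝ 1 u Ω) : ContDiffOn ℝ 1 (calibration hR u) Ω :=
  (IsCutoff.ballBump 0 hR).contDiff.contDiffOn.mul (contDiffOn_const.mul
    ((Real.contDiff_arctan.comp_contDiffOn (hu.div_const R)).add contDiffOn_const))

lemma calibration_mem_Icc (x : E) : calibration hR u x ∈ Icc 0 (Real.pi * R) := by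
  have hζ := (IsCutoff.ballBump (0 : E) hR).mem_Icc x
  have hψ := arctanProfile_mem_Icc hR (u x)
  exact ⟨mul_nonneg hζ.1 hψ.1, (mul_le_of_le_one_left hψ.1 hζ.2).trans hψ.2⟩

lemma ballBump_eq_zero {x : E} (hx : x ∉ closedBall 0 (3 / 2 * R)) : ballBump (0 : E) hR x = 0 :=
  image_eq_zero_of_notMem_tsupport (by rwa [ContDiffBump.tsupport_eq])

lemma enorm_arctanProfile_mul_fderiv_ballBump_le
    (hC : ∀ x, ‖fderiv ℝ (ballBump (0 : E) hR) x‖ₑ ≤ C * (ENNReal.ofReal R)⁻¹) {x v : E}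
    (hv : ‖v‖ₑ ≤ M) (s : ℝ) :
    ‖arctanProfile R s * fderiv ℝ (ballBump (0 : E) hR) x v‖ₑ ≤
      (closedBall (0 : E) (3 / 2 * R)).indicator (fun _ ↦ ↑(NNReal.pi * C * M)) x := by
  by_cases hx : x ∈ closedBall (0 : E) (3 / 2 * R)
  · have hψ := arctanProfile_mem_Icc hR s
    have hψ' : ‖arctanProfile R s‖ₑ ≤ NNReal.pi * ENNReal.ofReal R := by
      rw [Real.enorm_of_nonneg hψ.1, ← ENNReal.ofReal_coe_nnreal,
        ← ENNReal.ofReal_mul NNReal.pi.coe_nonneg]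
      exact ENNReal.ofReal_le_ofReal hψ.2
    rw [indicator_of_mem hx, enorm_mul]
    calc ‖arctanProfile R s‖ₑ * ‖fderiv ℝ (ballBump (0 : E) hR) x v‖ₑ
        ≤ NNReal.pi * ENNReal.ofReal R * (C * (ENNReal.ofReal R)⁻¹ * M) := by
          gcongr
          exact (ContinuousLinearMap.le_opENorm _ _).trans (mul_le_mul' (hC x) hv)
      _ = NNReal.pi * C * M * (ENNReal.ofReal R * (ENNReal.ofReal R)⁻¹) := by ring
      _ = ↑(NNReal.pi * C * M) := by
          rw [ENNReal.mul_inv_cancel (ENNReal.ofReal_pos.2 hR).ne' ENNReal.ofReal_ne_top, mul_one]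
          push_cast
          rfl
  · have hx' : x ∉ tsupport (ballBump (0 : E) hR) := by rwa [ContDiffBump.tsupport_eq]
    simp [fderiv_of_notMem_tsupport ℝ hx']

lemma enorm_apply_le_two_mul_ofReal_calibrationEnergy {x : E} (he : 0 ≤ D x (X x))
    (hx : √(‖x‖ ^ 2 + u x ^ 2) ≤ R) :
    ‖D x (X x)‖ₑ ≤ 2 * ENNReal.ofReal (calibrationEnergy hR u D X x) := by
  have hxR : ‖x‖ ≤ R := (Real.le_sqrt_of_sq_le (by nlinarith [sq_nonneg (u x)])).trans hx
  have huR : |u x| ≤ R := (Real.abs_le_sqrt (by nlinarith [sq_nonneg ‖x‖])).trans hx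
  have hζ : ballBump (0 : E) hR x = 1 :=
    ContDiffBump.one_of_mem_closedBall _ (mem_closedBall_zero_iff.2 hxR)
  rw [calibrationEnergy, hζ, one_mul, Real.enorm_of_nonneg he, ← ENNReal.ofReal_ofNat 2,
    ← ENNReal.ofReal_mul zero_le_two]
  gcongr
  linarith [mul_le_mul_of_nonneg_right (one_half_le_inv_one_add_div_sq huR) he]

lemma calibrationEnergy_nonneg {x : E} (he : 0 ≤ D x (X x)) :
    0 ≤ calibrationEnergy hR u D X x :=
  mul_nonneg ((IsCutoff.ballBump 0 hR).mem_Icc x).1 (by positivity)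

lemma exists_enorm_calibrationEnergy_le (hD : ContinuousOn D (closure Ω))
    (hX : ContinuousOn X (closure Ω)) :
    ∃ m : ℝ≥0, ∀ x ∈ Ω, ‖calibrationEnergy hR u D X x‖ₑ ≤ m := by
  obtain ⟨K, hK⟩ := ((isCompact_closedBall (0 : E) (3 / 2 * R)).inter_left
    isClosed_closure).exists_bound_of_continuousOn ((hD.clm_apply hX).mono inter_subset_left)
  refine ⟨K.toNNReal, fun x hx ↦ ?_⟩
  by_cases hxQ : x ∈ closedBall (0 : E) (3 / 2 * R)
  · have hζ := (IsCutoff.ballBump (0 : E) hR).mem_Icc x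
    have hinv : (1 + (u x / R) ^ 2)⁻¹ ≤ 1 :=
      inv_le_one_of_one_le₀ (by nlinarith [sq_nonneg (u x / R)])
    rw [← ofReal_norm]
    refine ENNReal.ofReal_le_ofReal ?_
    rw [calibrationEnergy, norm_mul, norm_mul, Real.norm_of_nonneg hζ.1,
      Real.norm_of_nonneg (by positivity)]
    calc ballBump (0 : E) hR x * ((1 + (u x / R) ^ 2)⁻¹ * ‖D x (X x)‖)
        ≤ 1 * (1 * ‖D x (X x)‖) := by gcongr; exact hζ.2
      _ ≤ K := by simpa using hK x ⟨subset_closure hx, hxQ⟩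
  · simp [calibrationEnergy, ballBump_eq_zero hR hxQ]

lemma exists_enorm_fderiv_calibration_apply_le (hu : ∀ x ∈ Ω, HasFDerivAt u (D x) x)
    (hD : ContinuousOn D (closure Ω)) (hX : ContinuousOn X (closure Ω))
    (hM : ∀ x ∈ closure Ω, ‖X x‖ₑ ≤ M) :
    ∃ m : ℝ≥0, ∀ x ∈ Ω, ‖fderiv ℝ (calibration hR u) x (X x)‖ₑ ≤ m := by
  obtain ⟨C, hC⟩ := exists_enorm_fderiv_ballBump_le E
  obtain ⟨m, hm⟩ := exists_enorm_calibrationEnergy_le hR hD hX (u := u)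
  refine ⟨m + NNReal.pi * C * M, fun x hx ↦ ?_⟩
  rw [fderiv_calibration_apply hR (hu x hx), ENNReal.coe_add]
  refine (enorm_add_le _ _).trans (add_le_add (hm x hx) ?_)
  exact (enorm_arctanProfile_mul_fderiv_ballBump_le hR (hC 0 R hR) (hM x (subset_closure hx))
    (u x)).trans (indicator_le_self _ _ x)

variable [MeasurableSpace E] [BorelSpace E] (μ : Measure E)

lemma integrableOn_calibrationEnergy [IsFiniteMeasureOnCompacts μ] (hΩ : IsOpen Ω)
    (hu : ContinuousOn u Ω) (hD : ContinuousOn D (closure Ω)) (hX : ContinuousOn X (closure Ω)) :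
    IntegrableOn (calibrationEnergy hR u D X) Ω μ := by
  obtain ⟨m, hm⟩ := exists_enorm_calibrationEnergy_le hR hD hX (u := u)
  have hinv : ContinuousOn (fun x ↦ (1 + (u x / R) ^ 2)⁻¹) Ω :=
    (continuousOn_const.add ((hu.div_const R).pow 2)).inv₀ fun x _ ↦
      (by positivity : 1 + (u x / R) ^ 2 ≠ 0)
  exact integrableOn_of_enorm_le hΩ (isCompact_closedBall (0 : E) (3 / 2 * R))
    ((IsCutoff.ballBump 0 hR).continuous.continuousOn.mul
      (hinv.mul ((hD.clm_apply hX).mono subset_closure)))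
    (fun x _ hxQ ↦ by simp [calibrationEnergy, ballBump_eq_zero hR hxQ]) hm

lemma integrableOn_fderiv_calibration_apply [IsFiniteMeasureOnCompacts μ] (hΩ : IsOpen Ω)
    (hu : ∀ x ∈ Ω, HasFDerivAt u (D x) x) (hD : ContinuousOn D (closure Ω))
    (hX : ContinuousOn X (closure Ω)) (hM : ∀ x ∈ closure Ω, ‖X x‖ₑ ≤ M) :
    IntegrableOn (fun x ↦ fderiv ℝ (calibration hR u) x (X x)) Ω μ := by
  obtain ⟨m, hm⟩ := exists_enorm_fderiv_calibration_apply_le hR hu hD hX hM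
  exact integrableOn_fderiv_apply hΩ (hX.mono subset_closure)
    (isCompact_closedBall 0 (3 / 2 * R))
    (contDiffOn_calibration hR (contDiffOn_one_of_hasFDerivAt hΩ hu (hD.mono subset_closure)))
    (fun x _ hxQ ↦ by simp [calibration, ballBump_eq_zero hR hxQ]) hm

lemma lintegral_calibrationEnergy_le [IsFiniteMeasureOnCompacts μ] (hΩ : IsOpen Ω)
    (hu : ∀ x ∈ Ω, HasFDerivAt u (D x) x) (hD : ContinuousOn D (closure Ω))
    (hX : ContinuousOn X (closure Ω)) (hM : ∀ x ∈ closure Ω, ‖X x‖ₑ ≤ M)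
    (he : ∀ x ∈ Ω, 0 ≤ D x (X x))
    (hC : ∀ x, ‖fderiv ℝ (ballBump (0 : E) hR) x‖ₑ ≤ C * (ENNReal.ofReal R)⁻¹) :
    ∫⁻ x in Ω, ENNReal.ofReal (calibrationEnergy hR u D X x) ∂μ ≤
      ENNReal.ofReal (∫ x in Ω, fderiv ℝ (calibration hR u) x (X x) ∂μ) +
        ↑(NNReal.pi * C * M) * μ (Ω ∩ closedBall 0 (3 / 2 * R)) := by
  have hu' := contDiffOn_one_of_hasFDerivAt hΩ hu (hD.mono subset_closure)
  have hw := integrableOn_calibrationEnergy hR μ hΩ hu'.continuousOn hD hX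
  have hF := integrableOn_fderiv_calibration_apply hR μ hΩ hu hD hX hM
  set b := fun x ↦ arctanProfile R (u x) * fderiv ℝ (ballBump (0 : E) hR) x (X x)
  have hsub : EqOn (calibrationEnergy hR u D X)
      (fun x ↦ fderiv ℝ (calibration hR u) x (X x) - b x) Ω := fun x hx ↦ by
    simp [b, fderiv_calibration_apply hR (hu x hx)]
  have hb : IntegrableOn b Ω μ := (hF.sub hw).congr_fun
    (fun x hx ↦ by simp [hsub hx]) hΩ.measurableSet
  rw [← ofReal_integral_eq_lintegral_ofReal hw
    ((ae_restrict_mem hΩ.measurableSet).mono fun x hx ↦ calibrationEnergy_nonneg hR (he x hx)),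
    setIntegral_congr_fun hΩ.measurableSet hsub, integral_sub hF hb, sub_eq_add_neg]
  refine ENNReal.ofReal_add_le.trans (add_le_add_right ?_ _)
  calc ENNReal.ofReal (-∫ x in Ω, b x ∂μ)
      ≤ ∫⁻ x in Ω, ‖b x‖ₑ ∂μ := by
        refine (Real.ofReal_le_enorm _).trans ?_
        rw [enorm_neg]
        exact enorm_integral_le_lintegral_enorm _
    _ ≤ ∫⁻ x in Ω, (closedBall (0 : E) (3 / 2 * R)).indicator
          (fun _ ↦ ↑(NNReal.pi * C * M)) x ∂μ :=
        setLIntegral_mono' hΩ.measurableSet fun x hx ↦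
          enorm_arctanProfile_mul_fderiv_ballBump_le hR hC (hM x (subset_closure hx)) (u x)
    _ = ↑(NNReal.pi * C * M) * μ (Ω ∩ closedBall 0 (3 / 2 * R)) := by
        rw [lintegral_indicator_const measurableSet_closedBall,
          Measure.restrict_apply measurableSet_closedBall, inter_comm]

lemma setLIntegral_enorm_apply_le (hΩ : IsOpen Ω) (hu : ContinuousOn u Ω)
    (he : ∀ x ∈ Ω, 0 ≤ D x (X x)) :
    ∫⁻ x in Ω ∩ {x | √(‖x‖ ^ 2 + u x ^ 2) ≤ R}, ‖D x (X x)‖ₑ ∂μ ≤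
      2 * ∫⁻ x in Ω, ENNReal.ofReal (calibrationEnergy hR u D X x) ∂μ := by
  calc ∫⁻ x in Ω ∩ {x | √(‖x‖ ^ 2 + u x ^ 2) ≤ R}, ‖D x (X x)‖ₑ ∂μ
      ≤ ∫⁻ x in Ω ∩ {x | √(‖x‖ ^ 2 + u x ^ 2) ≤ R},
          2 * ENNReal.ofReal (calibrationEnergy hR u D X x) ∂μ :=
        setLIntegral_mono' (measurableSet_inter_sqrt_le hΩ hu R) fun x hx ↦
          enorm_apply_le_two_mul_ofReal_calibrationEnergy hR (he x hx.1) hx.2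
    _ ≤ ∫⁻ x in Ω, 2 * ENNReal.ofReal (calibrationEnergy hR u D X x) ∂μ :=
        lintegral_mono_set inter_subset_left
    _ = _ := lintegral_const_mul' _ _ ENNReal.ofNat_ne_top

lemma exists_setLIntegral_enorm_apply_le [μ.IsAddHaarMeasure] :
    ∃ C : ℝ≥0, ∀ (Ω : Set E) (u : E → ℝ) (D : E → E →L[ℝ] ℝ) (X : E → E) (M : ℝ≥0) (R : ℝ),
      IsOpen Ω → HasC1Boundary Ω → (∀ x ∈ Ω, HasFDerivAt u (D x) x) →
      ContinuousOn D (closure Ω) → ContinuousOn X (closure Ω) → (∀ x ∈ closure Ω, ‖X x‖ₑ ≤ M) →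
      HasNonnegDivergence μ Ω X → (∀ x ∈ Ω, 0 ≤ D x (X x)) → 0 < R →
      μH[(finrank ℝ E : ℝ) - 1] (nontangentialBoundary Ω X ∩ closedBall 0 (3 / 2 * R)) ≠ ∞ →
      ∫⁻ x in Ω ∩ {x | √(‖x‖ ^ 2 + u x ^ 2) ≤ R}, ‖D x (X x)‖ₑ ∂μ ≤
        C * M * (μ (Ω ∩ closedBall 0 (3 / 2 * R)) + ENNReal.ofReal R *
          μH[(finrank ℝ E : ℝ) - 1] (nontangentialBoundary Ω X ∩ closedBall 0 (3 / 2 * R))) := by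
  rcases subsingleton_or_nontrivial E with _ | _
  · exact ⟨0, by intros; simp [Subsingleton.elim (_ : E) 0]⟩
  obtain ⟨C₁, hC₁⟩ := exists_ofReal_setIntegral_fderiv_le μ
  obtain ⟨C₂, hC₂⟩ := exists_enorm_fderiv_ballBump_le E
  refine ⟨2 * NNReal.pi * (C₁ + C₂), fun Ω u D X M R hΩ hΩ' hu hD hX hM hdiv he hR hfin ↦ ?_⟩
  have hu' := contDiffOn_one_of_hasFDerivAt hΩ hu (hD.mono subset_closure)
  set V := μ (Ω ∩ closedBall 0 (3 / 2 * R))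
  set H := μH[(finrank ℝ E : ℝ) - 1] (nontangentialBoundary Ω X ∩ closedBall 0 (3 / 2 * R))
  obtain ⟨m, hm⟩ := exists_enorm_fderiv_calibration_apply_le hR hu hD hX hM
  have hflux : ENNReal.ofReal (∫ x in Ω, fderiv ℝ (calibration hR u) x (X x) ∂μ) ≤
      ↑(NNReal.pi * R.toNNReal) * (C₁ * M * H) :=
    hC₁ Ω (closedBall 0 (3 / 2 * R)) X M hΩ hΩ' (isCompact_closedBall _ _) hX hM hdiv hfin _ _ m
      (contDiffOn_calibration hR hu')
      (fun x _ ↦ by simpa [hR.le] using calibration_mem_Icc hR x)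
      (fun x _ hxQ ↦ by simp [calibration, ballBump_eq_zero hR hxQ]) hm
  calc ∫⁻ x in Ω ∩ {x | √(‖x‖ ^ 2 + u x ^ 2) ≤ R}, ‖D x (X x)‖ₑ ∂μ
      ≤ 2 * (↑(NNReal.pi * R.toNNReal) * (C₁ * M * H) + ↑(NNReal.pi * C₂ * M) * V) :=
        (setLIntegral_enorm_apply_le hR μ hΩ hu'.continuousOn he).trans <| by
          gcongr
          exact (lintegral_calibrationEnergy_le hR μ hΩ hu hD hX hM he (hC₂ 0 R hR)).trans
            (by gcongr)
    _ = 2 * NNReal.pi * M * (C₂ * V + C₁ * (ENNReal.ofReal R * H)) := by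
        rw [ENNReal.ofReal]
        push_cast
        ring
    _ ≤ 2 * NNReal.pi * M * ((C₁ + C₂) * V + (C₁ + C₂) * (ENNReal.ofReal R * H)) := by
        gcongr
        exacts [le_add_self, le_self_add]
    _ = _ := by
        push_cast
        ring

end Calibration

section Gradient

namespace IsCkDomainWithNormal

variable {Ω : Set (EuclideanSpace ℝ (Fin n))}
  {η : EuclideanSpace ℝ (Fin n) → EuclideanSpace ℝ (Fin n)}

lemma exists_isLocalDefiningFunction (hΩ : IsCkDomainWithNormal 1 Ω η)
    {p : EuclideanSpace ℝ (Fin n)} (hp : p ∈ frontier Ω) :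
    ∃ V g, p ∈ V ∧ IsLocalDefiningFunction Ω V g ∧ η p = -(‖gradient g p‖⁻¹ • gradient g p) := by
  obtain ⟨V, g, hV, hpV, hg, hgrad, hΩV, hη⟩ := hΩ.2.2.2 p hp
  refine ⟨V, g, hpV, ⟨hV, by simpa using hg, fun x hx h ↦ hgrad x hx ?_, hΩV⟩, hη⟩
  rw [gradient, h, map_zero]

lemma hasC1Boundary (hΩ : IsCkDomainWithNormal 1 Ω η) : HasC1Boundary Ω := fun _ hp ↦
  let ⟨V, g, hpV, hg, _⟩ := hΩ.exists_isLocalDefiningFunction hp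
  ⟨V, g, hpV, hg⟩

lemma isTangentAt_iff_inner_eq_zero (hΩ : IsCkDomainWithNormal 1 Ω η)
    {p : EuclideanSpace ℝ (Fin n)} (hp : p ∈ frontier Ω) (v : EuclideanSpace ℝ (Fin n)) :
    IsTangentAt Ω p v ↔ ⟪v, η p⟫ = 0 := by
  obtain ⟨V, g, hpV, hg, hη⟩ := hΩ.exists_isLocalDefiningFunction hp
  have hgrad : gradient g p ≠ 0 := fun h ↦
    hg.fderiv_ne_zero p hpV (by rw [← toDual_gradient, h, map_zero])
  have hinner : ⟪v, η p⟫ = 0 ↔ fderiv ℝ g p v = 0 := by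
    rw [hη, inner_neg_right, inner_smul_right, real_inner_comm, inner_gradient_left, neg_eq_zero,
      mul_eq_zero, or_iff_right (inv_ne_zero (norm_ne_zero_iff.2 hgrad))]
  rw [hinner]
  exact ⟨fun h ↦ h V g hpV hg, hg.isTangentAt hΩ.2.1 hpV hp⟩

lemma nontangentialBoundary_eq (hΩ : IsCkDomainWithNormal 1 Ω η)
    (X : EuclideanSpace ℝ (Fin n) → EuclideanSpace ℝ (Fin n)) :
    nontangentialBoundary Ω X = {p ∈ frontier Ω | ⟪X p, η p⟫ ≠ 0} :=
  Set.ext fun _ ↦ and_congr_right fun hp ↦ (hΩ.isTangentAt_iff_inner_eq_zero hp _).not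

end IsCkDomainWithNormal

lemma IsWeakSolution.hasNonnegDivergence {a f : ℝ → ℝ} {Ω : Set (EuclideanSpace ℝ (Fin n))}
    {u : EuclideanSpace ℝ (Fin n) → ℝ} (hΩ : MeasurableSet Ω) (hsol : IsWeakSolution a f Ω u)
    (hfu : ∀ x ∈ Ω, f (u x) ≤ 0) :
    HasNonnegDivergence volume Ω fun x ↦ a ‖gradient u x‖ • gradient u x := by
  intro φ hφ hφc hφΩ hφ0
  calc ∫ x in Ω, fderiv ℝ φ x (a ‖gradient u x‖ • gradient u x)
      = ∫ x in Ω, a ‖gradient u x‖ * ⟪gradient u x, gradient φ x⟫ := by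
        simp [inner_gradient_right]
    _ = ∫ x in Ω, f (u x) * φ x :=
        hsol φ ⟨hφ.lipschitzWith_of_hasCompactSupport hφc one_ne_zero, hφc, hφΩ⟩
    _ ≤ 0 := setIntegral_nonpos hΩ fun x hx ↦ mul_nonpos_of_nonpos_of_nonneg (hfu x hx) (hφ0 x)

variable {E : Type*} [NormedAddCommGroup E] [InnerProductSpace ℝ E]

lemma enorm_smul_le_of_mul_le {a : ℝ → ℝ} {Cb : ℝ} (ha0 : ∀ t ≥ 0, 0 ≤ a t)
    (hbd : ∀ t > 0, t * a t ≤ Cb) (p : E) : ‖a ‖p‖ • p‖ₑ ≤ Cb.toNNReal := by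
  rcases eq_or_ne p 0 with rfl | hp
  · simp
  rw [← ofReal_norm, norm_smul, Real.norm_of_nonneg (ha0 _ (norm_nonneg p)), mul_comm]
  exact ENNReal.ofReal_le_ofReal (hbd _ (norm_pos_iff.2 hp))

lemma continuousOn_smul_comp_norm {a : ℝ → ℝ} (ha : ContinuousOn a (Ici 0)) {S : Set E}
    {Y : E → E} (hY : ContinuousOn Y S) : ContinuousOn (fun x ↦ a ‖Y x‖ • Y x) S :=
  (ha.comp hY.norm fun _ _ ↦ norm_nonneg _).smul hY

variable [FiniteDimensional ℝ E] [MeasurableSpace E] [BorelSpace E]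

lemma exists_setLIntegral_gradient_le (μ : Measure E) [μ.IsAddHaarMeasure] :
    ∃ C : ℝ≥0, ∀ (Ω : Set E) (a : ℝ → ℝ) (Cb : ℝ) (u : E → ℝ) (Du : E → E) (R : ℝ), IsOpen Ω →
      HasC1Boundary Ω → ContinuousOn a (Ici 0) → (∀ t ≥ 0, 0 ≤ a t) → (∀ t > 0, t * a t ≤ Cb) →
      (∀ x ∈ Ω, HasGradientAt u (Du x) x) → ContinuousOn Du (closure Ω) →
      HasNonnegDivergence μ Ω (fun x ↦ a ‖gradient u x‖ • gradient u x) → 0 < R →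
      μH[(finrank ℝ E : ℝ) - 1] (nontangentialBoundary Ω Du ∩ closedBall 0 (3 / 2 * R)) ≠ ∞ →
      ∫⁻ x in Ω ∩ {x | √(‖x‖ ^ 2 + u x ^ 2) ≤ R}, ‖a ‖gradient u x‖ * ‖gradient u x‖ ^ 2‖ₑ ∂μ ≤
        C * Cb.toNNReal * (μ (Ω ∩ closedBall 0 (3 / 2 * R)) + ENNReal.ofReal R *
          μH[(finrank ℝ E : ℝ) - 1] (nontangentialBoundary Ω Du ∩ closedBall 0 (3 / 2 * R))) := by
  obtain ⟨C, hC⟩ := exists_setLIntegral_enorm_apply_le μ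
  refine ⟨C, fun Ω a Cb u Du R hΩ hΩ' ha ha0 hbd hu hDu hdiv hR hfin ↦ ?_⟩
  set X := fun x ↦ a ‖Du x‖ • Du x
  set D := fun x ↦ InnerProductSpace.toDual ℝ E (Du x)
  have hDX (x : E) : D x (X x) = a ‖Du x‖ * ‖Du x‖ ^ 2 := by simp [D, X]
  have hgrad (x) (hx : x ∈ Ω) : gradient u x = Du x := (hu x hx).gradient
  have hH : μH[(finrank ℝ E : ℝ) - 1] (nontangentialBoundary Ω X ∩ closedBall 0 (3 / 2 * R)) ≤
      μH[(finrank ℝ E : ℝ) - 1] (nontangentialBoundary Ω Du ∩ closedBall 0 (3 / 2 * R)) :=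
    measure_mono (inter_subset_inter_left _ (nontangentialBoundary_smul_subset Ω _ _))
  have hS := measurableSet_inter_sqrt_le hΩ
    (fun x hx ↦ (hu x hx).continuousAt.continuousWithinAt) R
  rw [setLIntegral_congr_fun (g := fun x ↦ ‖D x (X x)‖ₑ) hS
    fun x hx ↦ by simp only [hDX, hgrad x hx.1]]
  refine (hC Ω u D X Cb.toNNReal R hΩ hΩ' (fun x hx ↦ (hu x hx).hasFDerivAt)
    ((InnerProductSpace.toDual ℝ E).continuous.comp_continuousOn hDu)
    (continuousOn_smul_comp_norm ha hDu) (fun x _ ↦ enorm_smul_le_of_mul_le ha0 hbd (Du x))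
    (hdiv.congr hΩ.measurableSet fun x hx ↦ by simp only [X, hgrad x hx])
    (fun x _ ↦ (hDX x).symm ▸ mul_nonneg (ha0 _ (norm_nonneg _)) (sq_nonneg _)) hR
    (ne_top_of_le_ne_top hfin hH)).trans (by gcongr)

theorem calibration_estimate_no_assumption_general (μ : Measure E) [μ.IsAddHaarMeasure] (Cb : ℝ) :
    ∃ C > (0 : ℝ), ∀ (Ω : Set E) (a : ℝ → ℝ) (u : E → ℝ) (Du : E → E), IsOpen Ω →
      HasC1Boundary Ω → ContinuousOn a (Ici 0) → (∀ t ≥ 0, 0 ≤ a t) → (∀ t > 0, t * a t ≤ Cb) →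
      (∀ x ∈ Ω, HasGradientAt u (Du x) x) → ContinuousOn Du (closure Ω) →
      HasNonnegDivergence μ Ω (fun x ↦ a ‖gradient u x‖ • gradient u x) → ∀ R > 0,
      ENNReal.ofReal (∫ x in Ω ∩ {x | √(‖x‖ ^ 2 + u x ^ 2) ≤ R},
          a ‖gradient u x‖ * ‖gradient u x‖ ^ 2 ∂μ) ≤
        ENNReal.ofReal C * (μ (Ω ∩ ball 0 (2 * R)) + ENNReal.ofReal R *
          μH[(finrank ℝ E : ℝ) - 1] (nontangentialBoundary Ω Du ∩ ball 0 (2 * R))) := by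
  obtain ⟨C, hC⟩ := exists_setLIntegral_gradient_le μ
  refine ⟨C * Cb.toNNReal + 1, by positivity,
    fun Ω a u Du hΩ hΩ' ha ha0 hbd hu hDu hdiv R hR ↦ ?_⟩
  have hball : closedBall (0 : E) (3 / 2 * R) ⊆ ball 0 (2 * R) :=
    closedBall_subset_ball (by linarith)
  have hCb : (C * Cb.toNNReal : ℝ≥0∞) ≤ ENNReal.ofReal (C * Cb.toNNReal + 1) := by
    rw [← ENNReal.coe_mul, ← ENNReal.ofReal_coe_nnreal, NNReal.coe_mul]
    exact ENNReal.ofReal_le_ofReal (le_add_of_nonneg_right zero_le_one)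
  by_cases hH : μH[(finrank ℝ E : ℝ) - 1] (nontangentialBoundary Ω Du ∩ ball 0 (2 * R)) = ∞
  · rw [hH, ENNReal.mul_top (ENNReal.ofReal_pos.2 hR).ne', add_top,
      ENNReal.mul_top (ENNReal.ofReal_pos.2 (by positivity)).ne']
    exact le_top
  calc ENNReal.ofReal (∫ x in Ω ∩ {x | √(‖x‖ ^ 2 + u x ^ 2) ≤ R},
          a ‖gradient u x‖ * ‖gradient u x‖ ^ 2 ∂μ)
      ≤ ∫⁻ x in Ω ∩ {x | √(‖x‖ ^ 2 + u x ^ 2) ≤ R},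
          ‖a ‖gradient u x‖ * ‖gradient u x‖ ^ 2‖ₑ ∂μ :=
        (Real.ofReal_le_enorm _).trans (enorm_integral_le_lintegral_enorm _)
    _ ≤ C * Cb.toNNReal * (μ (Ω ∩ closedBall 0 (3 / 2 * R)) + ENNReal.ofReal R *
          μH[(finrank ℝ E : ℝ) - 1] (nontangentialBoundary Ω Du ∩ closedBall 0 (3 / 2 * R))) :=
        hC Ω a Cb u Du R hΩ hΩ' ha ha0 hbd hu hDu hdiv hR
          (ne_top_of_le_ne_top hH (measure_mono (inter_subset_inter_right _ hball)))
    _ ≤ _ := by gcongr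

end Gradient

/-- Proposition 2.7(vi) of the paper, in `ℝⁿ` with `Ω₀ = Ω`: the calibration estimate with
no assumption on `u` apart from `f(u) ≤ 0`. -/
theorem calibration_estimate_no_assumption
    (n : ℕ) (Ω : Set (EuclideanSpace ℝ (Fin n)))
    (η : EuclideanSpace ℝ (Fin n) → EuclideanSpace ℝ (Fin n))
    (hΩ : IsCkDomainWithNormal 1 Ω η)
    (a : ℝ → ℝ) (hac : ContinuousOn a (Ici 0)) (ha0 : ∀ t ≥ (0 : ℝ), 0 ≤ a t)
    (hbd : ∃ Cb, ∀ t > (0 : ℝ), t * a t ≤ Cb)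
    (hlip : ∀ t ∈ Ici (0 : ℝ), ∃ V ∈ 𝓝[Ici (0 : ℝ)] t,
      ∃ K, LipschitzOnWith K (fun s => s * a s) V)
    (f : ℝ → ℝ) (hf : Continuous f)
    (u : EuclideanSpace ℝ (Fin n) → ℝ)
    (hu2 : ContDiffOn ℝ 2 u Ω) (hucl : ContinuousOn u (closure Ω))
    (Du : EuclideanSpace ℝ (Fin n) → EuclideanSpace ℝ (Fin n))
    (hDu : ∀ x ∈ Ω, Du x = gradient u x) (hDuc : ContinuousOn Du (closure Ω))
    (hsol : IsWeakSolution a f Ω u)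
    (hfu : ∀ x ∈ Ω, f (u x) ≤ 0) :
    ∃ C > (0 : ℝ), ∀ R > (1 : ℝ),
      ENNReal.ofReal (∫ x in Ω ∩ {x | Real.sqrt (‖x‖ ^ 2 + u x ^ 2) ≤ R},
          a ‖gradient u x‖ * ‖gradient u x‖ ^ 2)
        ≤ ENNReal.ofReal C *
          (volume (Ω ∩ Metric.ball (0 : EuclideanSpace ℝ (Fin n)) (2 * R)) +
            ENNReal.ofReal R *
              (μH[(n : ℝ) - 1] : Measure (EuclideanSpace ℝ (Fin n)))
                ({p ∈ frontier Ω | ⟪Du p, η p⟫ ≠ 0} ∩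
                  Metric.ball (0 : EuclideanSpace ℝ (Fin n)) (2 * R))) := by
  obtain ⟨Cb, hCb⟩ := hbd
  obtain ⟨C, hC, hest⟩ :=
    calibration_estimate_no_assumption_general (E := EuclideanSpace ℝ (Fin n)) volume Cb
  rw [finrank_euclideanSpace_fin] at hest
  refine ⟨C, hC, fun R hR ↦ ?_⟩
  have hgrad (x) (hx : x ∈ Ω) : HasGradientAt u (Du x) x :=
    hDu x hx ▸ ((hu2.contDiffAt (hΩ.2.1.mem_nhds hx)).differentiableAt two_ne_zero).hasGradientAt
  have hdiv := hsol.hasNonnegDivergence hΩ.2.1.measurableSet hfu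
  rw [← hΩ.nontangentialBoundary_eq]
  exact hest Ω a u Du hΩ.2.1 hΩ.hasC1Boundary hac ha0 hCb hgrad hDuc hdiv R (by linarith)
end
end

section
/- Let Ω ⊆ ℝⁿ be open, let a ∈ C¹([0,∞)) satisfy a(t) > 0 and (t·a(t))′ > 0 for all t ≥ 0, let f ∈ C¹(ℝ), and let u ∈ C²(Ω) be a weak solution of Δ_a u + f(u) = 0 in Ω. Then for every fixed vector e ∈ ℝⁿ, the function w := ⟨∇u, e⟩ ∈ C¹(Ω) is a weak solution of the linearized equation div(A(∇u)∇w) + f′(u)·w = 0 in Ω, that is, ∫_Ω ⟨A(∇u)∇w, ∇φ⟩ dx = ∫_Ω f′(u)·w·φ dx for every Lipschitz φ : ℝⁿ → ℝ with compact support contained in Ω. -/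
/-!
For `φ` with compact support in `Ω` and small `h`, the translate `φ(· - he)` is again a test
function, so `∫ ⟨a(|∇u|)∇u, ∇φ(· - he)⟩ = ∫ f(u) φ(· - he)`. After the change of variables
`x ↦ x + he` the parameter `h` sits only on the `C¹` maps `a(|∇u|)∇u` and `f(u)`; differentiating
under the integral at `h = 0` gives the linearized equation, since `p ↦ a(|p|) p` is `C¹` with
derivative `A(p)` and the Hessian of `u` is symmetric. No second derivative of `φ` is ever taken,
which is why Lipschitz test functions suffice.
-/

open MeasureTheory Set Metric Filter
open scoped RealInnerProductSpace Topology ENNReal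

noncomputable section

variable {n : ℕ}

section Translation

variable {E : Type*} [AddCommGroup E] [Module ℝ E] [TopologicalSpace E] [ContinuousAdd E]
  [ContinuousSMul ℝ E] {Ω K : Set E}

theorem eventually_forall_add_smul_mem (hΩ : IsOpen Ω) (hK : IsCompact K) (hKΩ : K ⊆ Ω) (e : E) :
    ∀ᶠ h : ℝ in 𝓝 0, ∀ x ∈ K, x + h • e ∈ Ω := by
  refine hK.eventually_forall_of_forall_eventually fun x hx => ?_
  have hcont : Continuous fun z : ℝ × E => z.2 + z.1 • e := by fun_prop
  exact hcont.continuousAt.eventually_mem (hΩ.mem_nhds (by simpa using hKΩ hx))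

theorem exists_norm_comp_add_smul_le {V : Type*} [SeminormedAddCommGroup V] (hΩ : IsOpen Ω)
    (hK : IsCompact K) (hKΩ : K ⊆ Ω) {Y : E → V} (hY : ContinuousOn Y Ω) (e : E) :
    ∃ M, ∀ᶠ h : ℝ in 𝓝 0, ∀ x ∈ K, ‖Y (x + h • e)‖ ≤ M := by
  obtain ⟨r, hr, hmem⟩ :=
    nhds_basis_closedBall.eventually_iff.1 (eventually_forall_add_smul_mem hΩ hK hKΩ e)
  have hcont : ContinuousOn (fun z : ℝ × E => Y (z.2 + z.1 • e)) (closedBall 0 r ×ˢ K) :=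
    hY.comp (by fun_prop) fun z hz => hmem hz.1 z.2 hz.2
  obtain ⟨M, hM⟩ := ((isCompact_closedBall 0 r).prod hK).exists_bound_of_continuousOn hcont
  exact ⟨M, eventually_of_mem (closedBall_mem_nhds 0 hr) fun h hh x hx => hM (h, x) ⟨hh, hx⟩⟩

end Translation

section InnerIntegral

variable {E V : Type*} [NormedAddCommGroup V] [InnerProductSpace ℝ V] {Ω K : Set E} {Y ψ : E → V}

theorem integrableOn_inner_of_continuousOn [TopologicalSpace E] [T2Space E] [MeasurableSpace E]
    [OpensMeasurableSpace E] {μ : Measure E} (hK : IsCompact K) (hY : ContinuousOn Y K)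
    (hψ : IntegrableOn ψ K μ) : IntegrableOn (fun x => ⟪Y x, ψ x⟫) K μ := by
  obtain ⟨M, hM⟩ := hK.exists_bound_of_continuousOn hY
  refine (hψ.norm.const_mul M).mono'
    ((hY.aestronglyMeasurable_of_isCompact hK hK.measurableSet).inner hψ.aestronglyMeasurable) ?_
  filter_upwards [ae_restrict_mem hK.measurableSet] with x hx
  exact (norm_inner_le_norm _ _).trans (by gcongr; exact hM x hx)

theorem setIntegral_inner_comp_sub [AddGroup E] [MeasurableSpace E] [MeasurableAdd E]
    {μ : Measure E} [μ.IsAddRightInvariant] {v : E} (hψ : ∀ x ∉ K, ψ x = 0)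
    (hv : ∀ x ∈ K, x + v ∈ Ω) :
    ∫ x in Ω, ⟪Y x, ψ (x - v)⟫ ∂μ = ∫ x in K, ⟪Y (x + v), ψ x⟫ ∂μ := by
  calc
    _ = ∫ x, ⟪Y x, ψ (x - v)⟫ ∂μ :=
      setIntegral_eq_integral_of_forall_compl_eq_zero fun x hx => by
        rw [hψ _ fun h => hx (by simpa using hv _ h), inner_zero_right]
    _ = ∫ x, ⟪Y (x + v), ψ x⟫ ∂μ := by
      simpa using integral_sub_right_eq_self (fun x => ⟪Y (x + v), ψ x⟫) v
    _ = _ := (setIntegral_eq_integral_of_forall_compl_eq_zero fun x hx => by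
      rw [hψ x hx, inner_zero_right]).symm

variable [NormedAddCommGroup E] [NormedSpace ℝ E] [MeasurableSpace E] {μ : Measure E}

theorem hasDerivAt_setIntegral_inner_comp_add_smul [OpensMeasurableSpace E] (hΩ : IsOpen Ω)
    (hK : IsCompact K) (hKΩ : K ⊆ Ω) (hY : ContDiffOn ℝ 1 Y Ω) (hψ : IntegrableOn ψ K μ) (e : E) :
    HasDerivAt (fun h : ℝ => ∫ x in K, ⟪Y (x + h • e), ψ x⟫ ∂μ)
      (∫ x in K, ⟪fderiv ℝ Y x e, ψ x⟫ ∂μ) 0 := by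
  have hmem := eventually_forall_add_smul_mem hΩ hK hKΩ e
  have hY' : ContinuousOn (fun x => fderiv ℝ Y x e) Ω :=
    (hY.continuousOn_fderiv_of_isOpen hΩ le_rfl).clm_apply continuousOn_const
  obtain ⟨M, hM⟩ := exists_norm_comp_add_smul_le hΩ hK hKΩ hY' e
  have hint : ∀ᶠ h : ℝ in 𝓝 0, IntegrableOn (fun x => ⟪Y (x + h • e), ψ x⟫) K μ :=
    hmem.mono fun h hh => integrableOn_inner_of_continuousOn hK
      (hY.continuousOn.comp (by fun_prop) hh) hψ
  have hderiv : ∀ x h, x + h • e ∈ Ω → HasDerivAt (fun h : ℝ => ⟪Y (x + h • e), ψ x⟫)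
      ⟪fderiv ℝ Y (x + h • e) e, ψ x⟫ h := by
    intro x h hx
    have hYx := ((hY.differentiableOn one_ne_zero).differentiableAt (hΩ.mem_nhds hx)).hasFDerivAt
    have hline : HasDerivAt (fun h : ℝ => x + h • e) e h := by
      simpa using ((hasDerivAt_id h).smul_const e).const_add x
    simpa using (hYx.comp_hasDerivAt h hline).inner ℝ (hasDerivAt_const h (ψ x))
  have key := hasDerivAt_integral_of_dominated_loc_of_deriv_le
    (F' := fun (h : ℝ) x => ⟪fderiv ℝ Y (x + h • e) e, ψ x⟫) (bound := fun x => M * ‖ψ x‖)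
    (hmem.and hM) (hint.mono fun h hh => hh.aestronglyMeasurable) hint.self_of_nhds
    (by simpa using (integrableOn_inner_of_continuousOn hK (hY'.mono hKΩ) hψ).aestronglyMeasurable)
    (by
      filter_upwards [ae_restrict_mem hK.measurableSet] with x hx h hh
      exact (norm_inner_le_norm _ _).trans (by gcongr; exact hh.2 x hx))
    (hψ.norm.const_mul M)
    (by
      filter_upwards [ae_restrict_mem hK.measurableSet] with x hx h hh
      exact hderiv x h (hh.1 x hx))
  simpa using key.2

theorem hasDerivAt_setIntegral_inner_comp_sub_smul [BorelSpace E] [μ.IsAddRightInvariant]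
    (hΩ : IsOpen Ω) (hY : ContDiffOn ℝ 1 Y Ω) (hψ : Integrable ψ μ) (hψc : HasCompactSupport ψ)
    (hψΩ : tsupport ψ ⊆ Ω) (e : E) :
    HasDerivAt (fun h : ℝ => ∫ x in Ω, ⟪Y x, ψ (x - h • e)⟫ ∂μ)
      (∫ x in Ω, ⟪fderiv ℝ Y x e, ψ x⟫ ∂μ) 0 := by
  have hψ0 : ∀ x ∉ tsupport ψ, ψ x = 0 := fun x => image_eq_zero_of_notMem_tsupport
  have hderiv : ∫ x in Ω, ⟪fderiv ℝ Y x e, ψ x⟫ ∂μ =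
      ∫ x in tsupport ψ, ⟪fderiv ℝ Y x e, ψ x⟫ ∂μ := by
    simpa using setIntegral_inner_comp_sub (v := 0) (Y := fun x => fderiv ℝ Y x e) hψ0
      fun x hx => by simpa using hψΩ hx
  rw [hderiv]
  refine (hasDerivAt_setIntegral_inner_comp_add_smul hΩ hψc hψΩ hY
    hψ.integrableOn e).congr_of_eventuallyEq ?_
  filter_upwards [eventually_forall_add_smul_mem hΩ hψc hψΩ e] with h hh
  exact setIntegral_inner_comp_sub hψ0 hh

end InnerIntegral

section Gradient

variable {E : Type*} [NormedAddCommGroup E] [InnerProductSpace ℝ E] [CompleteSpace E]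
  {u φ : E → ℝ} {Ω : Set E} {x : E}

theorem gradient_comp_sub (v : E) : gradient (fun y => φ (y - v)) x = gradient φ (x - v) := by
  rw [gradient, gradient, fderiv_comp_sub]

theorem contDiffOn_gradient_of_isOpen {k m : WithTop ℕ∞} (hΩ : IsOpen Ω) (hu : ContDiffOn ℝ k u Ω)
    (hmk : m + 1 ≤ k) : ContDiffOn ℝ m (gradient u) Ω :=
  (InnerProductSpace.toDual ℝ E).symm.contDiff.comp_contDiffOn (hu.fderiv_of_isOpen hΩ hmk)

theorem inner_fderiv_gradient (v w : E) :
    ⟪fderiv ℝ (gradient u) x v, w⟫ = fderiv ℝ (fderiv ℝ u) x v w := by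
  change ⟪fderiv ℝ ((InnerProductSpace.toDual ℝ E).symm ∘ fderiv ℝ u) x v, w⟫ = _
  rw [LinearIsometryEquiv.comp_fderiv]
  exact InnerProductSpace.toDual_symm_apply

theorem gradient_inner_gradient (hu : ContDiffAt ℝ 2 u x) (e : E) :
    gradient (fun y => ⟪gradient u y, e⟫) x = fderiv ℝ (gradient u) x e := by
  have hu' : DifferentiableAt ℝ (fderiv ℝ u) x :=
    (hu.fderiv_right (m := 1) (by norm_num)).differentiableAt one_ne_zero
  refine ext_inner_right ℝ fun v => ?_
  calc ⟪gradient (fun y => ⟪gradient u y, e⟫) x, v⟫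
    _ = fderiv ℝ (fun y => fderiv ℝ u y e) x v := by simp only [inner_gradient_left]
    _ = fderiv ℝ (fderiv ℝ u) x v e := by
      rw [(hu'.hasFDerivAt.clm_apply (hasFDerivAt_const e x)).fderiv]
      simp
    _ = fderiv ℝ (fderiv ℝ u) x e v := hu.isSymmSndFDerivAt (by simp) v e
    _ = ⟪fderiv ℝ (gradient u) x e, v⟫ := (inner_fderiv_gradient e v).symm

theorem fderiv_comp_apply_eq_deriv_mul_inner_gradient {f : ℝ → ℝ} (hf : DifferentiableAt ℝ f (u x))
    (hu : DifferentiableAt ℝ u x) (e : E) :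
    fderiv ℝ (f ∘ u) x e = deriv f (u x) * ⟪gradient u x, e⟫ := by
  rw [(hf.hasDerivAt.comp_hasFDerivAt x hu.hasFDerivAt).fderiv, inner_gradient_left]
  rfl

theorem tsupport_gradient_subset : tsupport (gradient φ) ⊆ tsupport φ :=
  (tsupport_comp_subset (map_zero (InnerProductSpace.toDual ℝ E).symm) _).trans
    (tsupport_fderiv_subset ℝ)

theorem hasCompactSupport_gradient (hφ : HasCompactSupport φ) : HasCompactSupport (gradient φ) :=
  (hφ.fderiv ℝ).comp_left (map_zero (InnerProductSpace.toDual ℝ E).symm)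

theorem integrable_gradient_of_lipschitzWith {F : Type*} [NormedAddCommGroup F]
    [InnerProductSpace ℝ F] [FiniteDimensional ℝ F] [MeasurableSpace F] [BorelSpace F]
    {μ : Measure F} [IsFiniteMeasureOnCompacts μ] {φ : F → ℝ} {L : NNReal}
    (hφ : LipschitzWith L φ) (hφc : HasCompactSupport φ) : Integrable (gradient φ) μ := by
  have hmeas : Measurable (gradient φ) :=
    (InnerProductSpace.toDual ℝ F).symm.continuous.measurable.comp (measurable_fderiv ℝ φ)
  refine memLp_one_iff_integrable.1 <| (hasCompactSupport_gradient hφc).memLp_of_bound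
    hmeas.aestronglyMeasurable L (ae_of_all _ fun x => ?_)
  rw [gradient, LinearIsometryEquiv.norm_map]
  exact norm_fderiv_le_of_lipschitz ℝ hφ

end Gradient

section Flux

theorem tendsto_comp_norm_of_continuousWithinAt {E : Type*} [SeminormedAddGroup E] {g : ℝ → ℝ}
    (hg : ContinuousWithinAt g (Ici 0) 0) : Tendsto (fun q : E => g ‖q‖) (𝓝 0) (𝓝 (g 0)) :=
  hg.tendsto.comp <| tendsto_nhdsWithin_iff.2
    ⟨tendsto_norm_zero, Eventually.of_forall norm_nonneg⟩

variable {E : Type*} [NormedAddCommGroup E] [InnerProductSpace ℝ E] {a : ℝ → ℝ} {p : E}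

/-- The flux `p ↦ a(|p|) p`, so that `Δ_a u = div (flux a (∇u))`. -/
def flux (a : ℝ → ℝ) (p : E) : E := a ‖p‖ • p

/-- The derivative `A(p)` of the flux as a continuous linear map; on Euclidean space it is `Aop`.
At `p = 0` it equals `a(0) Id`, because the rank-one term vanishes there. -/
def fluxDeriv (a : ℝ → ℝ) (p : E) : E →L[ℝ] E :=
  a ‖p‖ • ContinuousLinearMap.id ℝ E + (deriv a ‖p‖ / ‖p‖) • InnerProductSpace.rankOne ℝ p p

theorem fluxDeriv_zero : fluxDeriv a (0 : E) = a 0 • ContinuousLinearMap.id ℝ E := by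
  simp [fluxDeriv]

theorem hasFDerivAt_norm_of_ne_zero (hp : p ≠ 0) :
    HasFDerivAt (fun q : E => ‖q‖) (‖p‖⁻¹ • innerSL ℝ p) p := by
  have hsqrt := (hasFDerivAt_id (𝕜 := ℝ) p).norm_sq.sqrt (by simpa using hp)
  simp only [id, Real.sqrt_sq (norm_nonneg _)] at hsqrt
  refine hsqrt.congr_fderiv ?_
  ext v
  simp only [one_div, mul_inv_rev, ContinuousLinearMap.comp_id, smul_apply, coe_innerSL_apply,
    nsmul_eq_mul, Nat.cast_ofNat, smul_eq_mul]
  field_simp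

theorem hasFDerivAt_flux_of_ne_zero (hp : p ≠ 0) (ha : DifferentiableAt ℝ a ‖p‖) :
    HasFDerivAt (flux a) (fluxDeriv a p) p := by
  refine ((ha.hasDerivAt.comp_hasFDerivAt p (hasFDerivAt_norm_of_ne_zero hp)).smul
    (hasFDerivAt_id p)).congr_fderiv ?_
  ext v
  simp [fluxDeriv, smul_smul, div_eq_mul_inv, mul_assoc]

theorem hasFDerivAt_flux_zero (ha : ContinuousWithinAt a (Ici 0) 0) :
    HasFDerivAt (flux a) (fluxDeriv a (0 : E)) 0 := by
  have hsmall : Tendsto (fun q : E => a ‖q‖ - a 0) (𝓝 0) (𝓝 0) := by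
    simpa using (tendsto_comp_norm_of_continuousWithinAt ha).sub_const (a 0)
  rw [hasFDerivAt_iff_isLittleO_nhds_zero]
  simpa [flux, fluxDeriv_zero, sub_smul] using
    ((Asymptotics.isLittleO_one_iff ℝ).2 hsmall).smul_isBigO
      (Asymptotics.isBigO_refl (fun q : E => q) (𝓝 0))

theorem hasFDerivAt_flux (ha : ContDiffOn ℝ 1 a (Ici 0)) (p : E) :
    HasFDerivAt (flux a) (fluxDeriv a p) p := by
  rcases eq_or_ne p 0 with rfl | hp
  · exact hasFDerivAt_flux_zero (ha.continuousOn 0 self_mem_Ici)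
  · exact hasFDerivAt_flux_of_ne_zero hp <|
      (ha.differentiableOn one_ne_zero).differentiableAt (Ici_mem_nhds (norm_pos_iff.2 hp))

theorem norm_fluxDeriv_sub_smul_id (p : E) :
    ‖fluxDeriv a p - a ‖p‖ • ContinuousLinearMap.id ℝ E‖ = |deriv a ‖p‖| * ‖p‖ := by
  rcases eq_or_ne p 0 with rfl | hp
  · simp [fluxDeriv_zero]
  · have : ‖p‖ ≠ 0 := norm_ne_zero_iff.2 hp
    simp only [fluxDeriv, add_sub_cancel_left, norm_smul, InnerProductSpace.norm_rankOne, norm_div,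
      Real.norm_eq_abs, abs_norm]
    field_simp

/- `deriv a 0` is two-sided and may be a junk value; it is multiplied by `‖0‖ = 0`, so the one-sided
derivative, which is continuous up to `0`, can replace it. -/
theorem continuousAt_fluxDeriv_zero (ha : ContDiffOn ℝ 1 a (Ici 0)) :
    ContinuousAt (fluxDeriv a) (0 : E) := by
  have ha' : ContinuousWithinAt (derivWithin a (Ici 0)) (Ici 0) 0 :=
    ha.continuousOn_derivWithin (uniqueDiffOn_Ici 0) le_rfl 0 self_mem_Ici
  have hbound : Tendsto (fun q : E => |derivWithin a (Ici 0) ‖q‖| * ‖q‖) (𝓝 0) (𝓝 0) := by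
    simpa only [mul_zero] using
      (tendsto_comp_norm_of_continuousWithinAt ha').abs.mul tendsto_norm_zero
  have hrank : Tendsto (fun q : E => fluxDeriv a q - a ‖q‖ • ContinuousLinearMap.id ℝ E)
      (𝓝 0) (𝓝 0) := by
    refine squeeze_zero_norm (fun q => ?_) hbound
    rw [norm_fluxDeriv_sub_smul_id]
    rcases eq_or_ne q 0 with rfl | hq
    · simp
    · rw [derivWithin_of_mem_nhds (Ici_mem_nhds (norm_pos_iff.2 hq))]
  have hid : Tendsto (fun q : E => a ‖q‖ • ContinuousLinearMap.id ℝ E) (𝓝 0)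
      (𝓝 (a 0 • ContinuousLinearMap.id ℝ E)) :=
    (tendsto_comp_norm_of_continuousWithinAt (ha.continuousOn 0 self_mem_Ici)).smul_const _
  simpa [ContinuousAt, fluxDeriv_zero] using hrank.add hid

theorem contDiff_flux (ha : ContDiffOn ℝ 1 a (Ici 0)) : ContDiff ℝ 1 (flux a : E → E) := by
  have hderiv : fderiv ℝ (flux a : E → E) = fluxDeriv a :=
    funext fun p => (hasFDerivAt_flux ha p).fderiv
  rw [contDiff_one_iff_fderiv]
  refine ⟨fun p => (hasFDerivAt_flux ha p).differentiableAt,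
    continuous_iff_continuousAt.2 fun p => ?_⟩
  rcases eq_or_ne p 0 with rfl | hp
  · exact hderiv ▸ continuousAt_fluxDeriv_zero ha
  · have haN : ContDiffAt ℝ 1 (fun q : E => a ‖q‖) p :=
      (ha.contDiffAt (Ici_mem_nhds (norm_pos_iff.2 hp))).comp p (contDiffAt_norm ℝ hp)
    exact ((haN.smul contDiffAt_id).fderiv_right (m := 0) le_rfl).continuousAt

end Flux

section WeakSolution

variable {Ω : Set (EuclideanSpace ℝ (Fin n))} {a f : ℝ → ℝ} {u φ : EuclideanSpace ℝ (Fin n) → ℝ}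

theorem fluxDeriv_apply (p v : EuclideanSpace ℝ (Fin n)) : fluxDeriv a p v = Aop a p v := by
  simp [fluxDeriv, Aop, smul_smul]

theorem fderiv_flux_gradient_apply (ha : ContDiffOn ℝ 1 a (Ici 0)) {x : EuclideanSpace ℝ (Fin n)}
    (hu : ContDiffAt ℝ 2 u x) (e : EuclideanSpace ℝ (Fin n)) :
    fderiv ℝ (flux a ∘ gradient u) x e =
      Aop a (gradient u x) (gradient (fun y => ⟪gradient u y, e⟫) x) := by
  have hgrad : DifferentiableAt ℝ (gradient u) x :=
    (InnerProductSpace.toDual ℝ _).symm.differentiable.differentiableAt.comp x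
      ((hu.fderiv_right (m := 1) (by norm_num)).differentiableAt one_ne_zero)
  rw [((hasFDerivAt_flux ha _).comp x hgrad.hasFDerivAt).fderiv, gradient_inner_gradient hu]
  exact fluxDeriv_apply _ _

theorem IsTestOn.comp_sub (hφ : IsTestOn Ω φ) {v : EuclideanSpace ℝ (Fin n)}
    (hv : ∀ x ∈ tsupport φ, x + v ∈ Ω) : IsTestOn Ω fun x => φ (x - v) := by
  obtain ⟨⟨L, hL⟩, hφc, -⟩ := hφ
  have hsupp : tsupport (fun x => φ (x - v)) = (fun x => x - v) ⁻¹' tsupport φ :=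
    tsupport_comp_eq_preimage φ (Homeomorph.subRight v)
  refine ⟨⟨L, LipschitzWith.of_dist_le_mul fun x y => ?_⟩,
    hφc.comp_homeomorph (Homeomorph.subRight v), fun x hx => ?_⟩
  · simpa using hL.dist_le_mul (x - v) (y - v)
  · rw [hsupp] at hx
    simpa using hv _ hx

theorem IsWeakSolution.setIntegral_flux_comp_sub (hsol : IsWeakSolution a f Ω u)
    (hφ : IsTestOn Ω φ) {v : EuclideanSpace ℝ (Fin n)} (hv : ∀ x ∈ tsupport φ, x + v ∈ Ω) :
    ∫ x in Ω, ⟪flux a (gradient u x), gradient φ (x - v)⟫ = ∫ x in Ω, ⟪f (u x), φ (x - v)⟫ := by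
  simpa only [gradient_comp_sub, flux, real_inner_smul_left, RCLike.inner_apply, conj_trivial,
    mul_comm (φ _)] using hsol _ (hφ.comp_sub hv)

theorem derivative_solves_linearized_general (hΩ : IsOpen Ω) (ha : ContDiffOn ℝ 1 a (Ici 0))
    (hf : ContDiff ℝ 1 f) (hu : ContDiffOn ℝ 2 u Ω) (hsol : IsWeakSolution a f Ω u)
    (e : EuclideanSpace ℝ (Fin n)) (hφ : IsTestOn Ω φ) :
    ∫ x in Ω, ⟪Aop a (gradient u x) (gradient (fun y => ⟪gradient u y, e⟫) x), gradient φ x⟫ =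
      ∫ x in Ω, deriv f (u x) * ⟪gradient u x, e⟫ * φ x := by
  have ⟨⟨L, hL⟩, hφc, hφΩ⟩ := hφ
  have hlhs := hasDerivAt_setIntegral_inner_comp_sub_smul (μ := volume) hΩ
    ((contDiff_flux ha).comp_contDiffOn (contDiffOn_gradient_of_isOpen hΩ hu (by norm_num)))
    (integrable_gradient_of_lipschitzWith hL hφc) (hasCompactSupport_gradient hφc)
    (tsupport_gradient_subset.trans hφΩ) e
  have hrhs := hasDerivAt_setIntegral_inner_comp_sub_smul (μ := volume) hΩ
    (hf.comp_contDiffOn (hu.of_le one_le_two))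
    (hL.continuous.integrable_of_hasCompactSupport hφc) hφc hφΩ e
  have htranslate := (eventually_forall_add_smul_mem hΩ hφc hφΩ e).mono fun h hh =>
    hsol.setIntegral_flux_comp_sub hφ hh
  convert hlhs.unique (hrhs.congr_of_eventuallyEq htranslate) using 1
  · refine setIntegral_congr_fun hΩ.measurableSet fun x hx => ?_
    exact congrArg (⟪·, gradient φ x⟫)
      (fderiv_flux_gradient_apply ha (hu.contDiffAt (hΩ.mem_nhds hx)) e).symm
  · refine setIntegral_congr_fun hΩ.measurableSet fun x hx => ?_
    have hux := (hu.differentiableOn two_ne_zero).differentiableAt (hΩ.mem_nhds hx)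
    change _ = φ x * fderiv ℝ (f ∘ u) x e
    rw [fderiv_comp_apply_eq_deriv_mul_inner_gradient (hf.differentiable one_ne_zero _) hux,
      mul_comm]

end WeakSolution

/-- Lemma 3.3 of the paper in `ℝⁿ` with the Killing field a constant field `e`:
`w = ⟨∇u, e⟩` solves the linearized equation weakly. -/
theorem derivative_solves_linearized
    (n : ℕ) (Ω : Set (EuclideanSpace ℝ (Fin n))) (hΩ : IsOpen Ω)
    (a : ℝ → ℝ) (ha : ContDiffOn ℝ 1 a (Ici 0))
    (hapos : ∀ t ≥ (0 : ℝ), 0 < a t) (hlam : ∀ t ≥ (0 : ℝ), 0 < lam1 a t)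
    (f : ℝ → ℝ) (hf : ContDiff ℝ 1 f)
    (u : EuclideanSpace ℝ (Fin n) → ℝ) (hu : ContDiffOn ℝ 2 u Ω)
    (hsol : IsWeakSolution a f Ω u)
    (e : EuclideanSpace ℝ (Fin n)) :
    ∀ φ : EuclideanSpace ℝ (Fin n) → ℝ, IsTestOn Ω φ →
      ∫ x in Ω,
          ⟪Aop a (gradient u x) (gradient (fun y => ⟪gradient u y, e⟫) x),
            gradient φ x⟫
        = ∫ x in Ω, deriv f (u x) * ⟪gradient u x, e⟫ * φ x := by
  intro φ hφ
  exact derivative_solves_linearized_general hΩ ha hf hu hsol e hφ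
end
end
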